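/- arXiv:1206.3916 — 4 statements merged into one kernel-verified Lean document; each statement's English description precedes it below -/
import Mathlib

section
/- Let FS_1 be the free shelf on one generator x. Let VB_2^+ be the monoid presented by generators σ, ζ and the single relation ζ² = 1, and let ρ be the monoid homomorphism from VB_2^+ to self-maps of FS_1 × FS_1 determined by ρ(σ)(a,b) = (b, a◁b) and ρ(ζ)(a,b) = (b,a). Then ρ is injective. -/
/-- The self-distributivity relation on a free magma. -/
def sdRel (α : Type*) : FreeMagma α → FreeMagma α → Prop := fun a b =>
  ∃ t u v : FreeMagma α, a = t * u * v ∧ b = (t * v) * (u * v)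

/-- The free shelf on `α`. -/
abbrev FreeShelf (α : Type*) := (conGen (sdRel α)).Quotient

/-- The defining relation of `VB_2^+`: generators `σ = false`, `ζ = true`, relation
`ζ² = 1`. -/
def vb2Rels : FreeMonoid Bool → FreeMonoid Bool → Prop := fun a b =>
  a = FreeMonoid.of true * FreeMonoid.of true ∧ b = 1

namespace VBProof

abbrev F := FreeGroup ℕ
abbrev E := Monoid.End F

/-- index shift on the free group -/
def S : F →* F := FreeGroup.map Nat.succ

theorem S_inj : Function.Injective S := FreeGroup.map_injective Nat.succ_injective

def shFun (f : E) : E :=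
  FreeGroup.lift (fun n => Nat.casesOn n (FreeGroup.of 0) (fun k => S (f (FreeGroup.of k))))

@[simp] theorem shFun_zero (f : E) : shFun f (FreeGroup.of 0) = FreeGroup.of 0 :=
  FreeGroup.lift_apply_of

theorem shFun_succ (f : E) (k : ℕ) :
    shFun f (FreeGroup.of (k+1)) = S (f (FreeGroup.of k)) :=
  FreeGroup.lift_apply_of

theorem E_mul (f g : E) (y : F) : (f * g) y = f (g y) := rfl

theorem shFun_S (f : E) (g : F) : shFun f (S g) = S (f g) := by
  have : MonoidHom.comp (shFun f) S = S.comp f := by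
    apply FreeGroup.ext_hom
    intro k
    show shFun f (S (FreeGroup.of k)) = S (f (FreeGroup.of k))
    rw [← shFun_succ]
    simp [S]
  exact DFunLike.congr_fun this g

theorem E_ext {f g : E} (h0 : f (FreeGroup.of 0) = g (FreeGroup.of 0))
    (h : ∀ k, f (FreeGroup.of (k+1)) = g (FreeGroup.of (k+1))) : f = g := by
  apply FreeGroup.ext_hom
  intro n
  cases n with
  | zero => exact h0
  | succ k => exact h k

def shE : E →* E where
  toFun := shFun
  map_one' := by
    apply E_ext
    · simp
    · intro k; rw [shFun_succ]; simp [S]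
  map_mul' f g := by
    apply E_ext
    · simp
    · intro k
      rw [shFun_succ, E_mul, E_mul, shFun_succ, shFun_S]

theorem shE_inj : Function.Injective shE := by
  intro f g h
  apply FreeGroup.ext_hom
  intro n
  apply S_inj
  have h1 := DFunLike.congr_fun h (FreeGroup.of (n+1))
  exact ((shFun_succ f n).symm.trans h1).trans (shFun_succ g n)

abbrev G := Eˣ

def sh : G →* G := Units.map shE

theorem sh_inj : Function.Injective sh := Units.map_injective shE_inj

def x (n : ℕ) : F := FreeGroup.of n

def sFun : E := FreeGroup.lift (fun n =>
  match n with
  | 0 => x 0 * x 1 * (x 0)⁻¹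
  | 1 => x 0
  | k+2 => x (k+2))

def sInv : E := FreeGroup.lift (fun n =>
  match n with
  | 0 => x 1
  | 1 => (x 1)⁻¹ * x 0 * x 1
  | k+2 => x (k+2))

@[simp] theorem sFun0 : sFun (x 0) = x 0 * x 1 * (x 0)⁻¹ :=
  FreeGroup.lift_apply_of
@[simp] theorem sFun1 : sFun (x 1) = x 0 :=
  FreeGroup.lift_apply_of
@[simp] theorem sFun2 (k : ℕ) : sFun (x (k+2)) = x (k+2) :=
  FreeGroup.lift_apply_of
@[simp] theorem sInv0 : sInv (x 0) = x 1 :=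
  FreeGroup.lift_apply_of
@[simp] theorem sInv1 : sInv (x 1) = (x 1)⁻¹ * x 0 * x 1 :=
  FreeGroup.lift_apply_of
@[simp] theorem sInv2 (k : ℕ) : sInv (x (k+2)) = x (k+2) :=
  FreeGroup.lift_apply_of

theorem E_ext2 {f g : E} (h0 : f (x 0) = g (x 0)) (h1 : f (x 1) = g (x 1))
    (h : ∀ k, f (x (k+2)) = g (x (k+2))) : f = g := by
  apply FreeGroup.ext_hom
  intro n
  match n with
  | 0 => exact h0
  | 1 => exact h1
  | k+2 => exact h k

def s : G where
  val := sFun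
  inv := sInv
  val_inv := by
    apply E_ext2
    · simp
    · simp [mul_assoc]
    · simp
  inv_val := by
    apply E_ext2
    · simp [mul_assoc]
    · simp
    · simp

@[simp] theorem S_x (k : ℕ) : S (x k) = x (k+1) := by simp [S, x]
theorem shE_zero (f : E) : shE f (x 0) = x 0 := shFun_zero f
theorem shE_S (f : E) (g : F) : shE f (S g) = S (f g) := shFun_S f g
theorem shE_succ (f : E) (k : ℕ) : shE f (x (k+1)) = S (f (x k)) := shFun_succ f k

theorem sFun_SS (g : F) : sFun (S (S g)) = S (S g) := by
  have : (sFun.comp (S.comp S)) = S.comp S := by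
    ext k
    show sFun (S (S (x k))) = S (S (x k))
    simp
  exact DFunLike.congr_fun this g

theorem s_comm (g : G) : s * sh (sh g) = sh (sh g) * s := by
  apply Units.ext
  show sFun * shE (shE g) = shE (shE g) * sFun
  have h0 : shE (shE (g : E)) (x 0) = x 0 := shE_zero _
  have h1 : shE (shE (g : E)) (x 1) = x 1 := by
    rw [shE_succ, shE_zero, S_x]
  apply E_ext2
  · simp [h0, h1]
  · simp [h0, h1]
  · intro k
    simp only [E_mul, sFun2]
    rw [shE_succ, shE_succ, sFun_SS]

theorem s_braid : s * sh s * s = sh s * s * sh s := by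
  apply Units.ext
  show sFun * shE sFun * sFun = shE sFun * sFun * shE sFun
  have h0 : shE sFun (x 0) = x 0 := shE_zero _
  have h1 : shE sFun (x 1) = x 1 * x 2 * (x 1)⁻¹ := by
    rw [shE_succ, sFun0]; simp
  have h2 : shE sFun (x 2) = x 1 := by
    rw [shE_succ, sFun1]; simp
  have h3 (k : ℕ) : shE sFun (x (k+3)) = x (k+3) := by
    rw [shE_succ, sFun2]; simp
  have h4 : sFun (x 2) = x 2 := sFun2 0
  have h5 (k : ℕ) : sFun (x (k+3)) = x (k+3) := sFun2 (k+1)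
  apply E_ext2
  · simp [h0, h1, h2, h4, mul_assoc]
  · simp [h0, h1, h2, h4, mul_assoc]
  · intro k
    cases k with
    | zero => simp [h0, h1, h2, h4, mul_assoc]
    | succ k => simp [h3, h5, add_assoc]

theorem no_S (g : F) : S g ≠ (x 0)⁻¹ * x 1 * x 0 := by
  intro h
  let r : F →* F := FreeGroup.lift (fun n => Nat.casesOn n 1 (fun k => x (k+1)))
  have hr : r (S g) = S g := by
    have : r.comp S = S := by
      ext k
      simp [r, S, x]
    exact DFunLike.congr_fun this g
  have h0 : r (x 0) = 1 := by simp [r, x]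
  have h1 : r (x 1) = x 1 := by simp [r, x]
  have h2 : x 1 = (x 0)⁻¹ * x 1 * x 0 := by
    rw [← h, ← hr, h]; simp [h0, h1]
  let p : F →* Equiv.Perm (Fin 3) := FreeGroup.lift
    (fun n => if n = 0 then Equiv.swap 0 1 else Equiv.swap 1 2)
  have h3 := congrArg p h2
  have p0 : p (x 0) = Equiv.swap 0 1 := by simp [p, x]
  have p1 : p (x 1) = Equiv.swap 1 2 := by simp [p, x]
  rw [map_mul, map_mul, map_inv, p0, p1] at h3
  revert h3
  decide

theorem no_cycle (c d : G) : s * sh c * s ≠ sh d := by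
  intro h
  have h1 : sFun * shE c * sFun = shE d := congrArg Units.val h
  have h2 := DFunLike.congr_fun h1 (x 0)
  simp only [E_mul, sFun0, map_mul, map_inv, shE_zero, shE_succ] at h2
  apply no_S ((c : E) (x 0))
  have inj : Function.Injective sFun := by
    apply Function.LeftInverse.injective (g := sInv)
    intro y
    exact DFunLike.congr_fun s.inv_val y
  apply inj
  simp only [map_mul, map_inv, sFun0, sFun1]
  generalize sFun (S ((c : E) (x 0))) = z at *
  rw [mul_inv_eq_iff_eq_mul] at h2
  rw [mul_assoc, ← h2]
  group

/-- The left shelf operation on `G`. -/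
def star (a b : G) : G := a * sh b * s * (sh a)⁻¹

theorem star_dist (a b c : G) : star a (star b c) = star (star a b) (star a c) := by
  have e1 : (sh (sh b))⁻¹ * s = s * (sh (sh b))⁻¹ := by
    rw [inv_mul_eq_iff_eq_mul, ← mul_assoc, ← s_comm, mul_inv_cancel_right]
  have e2 : (sh (sh a))⁻¹ * s * sh (sh a) = s := by
    rw [mul_assoc, s_comm, inv_mul_cancel_left]
  have e3 : s * sh s * s * (sh s)⁻¹ = sh s * s := by
    rw [s_braid, mul_inv_cancel_right]
  simp only [star, map_mul, map_inv, mul_inv_rev, inv_inv]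
  calc _ = a * sh b * sh (sh c) * sh s * ((sh (sh b))⁻¹ * s) * (sh a)⁻¹ := by group
    _ = a * sh b * sh (sh c) * (sh s * s) * (sh (sh b))⁻¹ * (sh a)⁻¹ := by rw [e1]; group
    _ = a * sh b * (sh (sh c) * s) * sh s * s * (sh s)⁻¹ * (sh (sh b))⁻¹ * (sh a)⁻¹ := by
      rw [← e3]; group
    _ = a * sh b * (s * sh (sh c)) * sh s * ((sh (sh a))⁻¹ * s * sh (sh a)) *
        (sh s)⁻¹ * (sh (sh b))⁻¹ * (sh a)⁻¹ := by rw [e2, s_comm]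
    _ = _ := by group

theorem star_cancel {a b c : G} (h : star a b = star a c) : b = c := by
  simp only [star] at h
  exact sh_inj (mul_left_cancel (mul_right_cancel (mul_right_cancel h)))

theorem star_acyclic (a b c : G) : b ≠ star (star b a) c := by
  intro h
  apply no_cycle (b⁻¹ * c) (a⁻¹ * star b a)
  have h' : b * (sh a * s * (sh b)⁻¹ * sh c * s * (sh (star b a))⁻¹) = b * 1 := by
    rw [mul_one]
    conv_rhs => rw [h]
    rw [star, star]; group
  have h2 := mul_left_cancel h'
  rw [mul_inv_eq_one] at h2
  rw [map_mul, map_mul, ← h2, map_inv, map_inv]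
  group

/-- The test shelf. -/
def T := G × ℕ

instance : Mul T := ⟨fun a b => (star b.1 a.1, a.2 + 1)⟩

theorem T_dist (a b c : T) : a * b * c = (a * c) * (b * c) :=
  Prod.ext (star_dist c.1 b.1 a.1) rfl

theorem T_cancel {a b c : T} (h : a * c = b * c) : a = b :=
  Prod.ext (star_cancel (congrArg Prod.fst h)) (Nat.succ_injective (congrArg Prod.snd h))

theorem T_acyclic (a b c : T) : b ≠ c * (a * b) := fun h =>
  star_acyclic a.1 b.1 c.1 (congrArg Prod.fst h)

def t0 : T := ((1 : G), 0)

theorem T_irred (a b : T) : t0 ≠ a * b := fun h => by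
  have h2 : (0 : ℕ) = a.2 + 1 := congrArg Prod.snd h
  omega

def ev0 : FreeMagma Unit →ₙ* T := FreeMagma.lift (fun _ => t0)

theorem ev0_rel {a b : FreeMagma Unit} (h : conGen (sdRel Unit) a b) : ev0 a = ev0 b := by
  have h' : ConGen.Rel (sdRel Unit) a b := h
  clear h
  induction h' with
  | of a b h =>
    obtain ⟨t, u, v, rfl, rfl⟩ := h
    simp only [map_mul]
    exact T_dist _ _ _
  | refl => rfl
  | symm _ ih => exact ih.symm
  | trans h1 h2 ih1 ih2 => exact ih1.trans ih2
  | mul h1 h2 ih1 ih2 => rw [map_mul, map_mul, ih1, ih2]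

def ev (a : FreeShelf Unit) : T := Con.liftOn a ev0 (fun _ _ h => ev0_rel h)

theorem ev_mul (a b : FreeShelf Unit) : ev (a * b) = ev a * ev b := by
  induction a, b using Con.induction_on₂ with
  | _ a b => exact map_mul ev0 a b

def gen : FreeShelf Unit := ((FreeMagma.of () : FreeMagma Unit) : FreeShelf Unit)

theorem ev_gen : ev gen = t0 := rfl

/-- Steps on pairs: `true` is `A`, `false` is `B`. -/
def step {M : Type*} [Mul M] (c : Bool) (p : M × M) : M × M :=
  if c then (p.1 * p.2, p.2) else (p.1, p.2 * p.1)

theorem step_inj (c : Bool) : Function.Injective (step (M := T) c) := by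
  rintro ⟨a, b⟩ ⟨a', b'⟩ h
  cases c
  · simp only [step, Bool.false_eq_true, if_false, Prod.mk.injEq] at h
    obtain ⟨rfl, h⟩ := h
    rw [T_cancel h]
  · simp only [step, if_true, Prod.mk.injEq] at h
    obtain ⟨h, rfl⟩ := h
    rw [T_cancel h]

theorem step_tf (p q : T × T) : step true p ≠ step false q := by
  intro h
  simp only [step, Bool.false_eq_true, if_false, if_true, Prod.mk.injEq] at h
  apply T_acyclic p.1 p.2 q.2
  rw [h.1, ← h.2]

theorem step_t0 (c : Bool) (p : T × T) : step c p ≠ (t0, t0) := by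
  intro h
  cases c
  · exact T_irred _ _ (congrArg Prod.snd h).symm
  · exact T_irred _ _ (congrArg Prod.fst h).symm

def act {M : Type*} [Mul M] (w : List Bool) (p : M × M) : M × M := w.foldr step p

theorem act_inj (w : List Bool) : Function.Injective (act (M := T) w) := by
  induction w with
  | nil => exact fun _ _ h => h
  | cons c w ih => exact fun _ _ h => ih (step_inj c h)

theorem act_t0 (w v : List Bool) (h : act w (t0, t0) = act v (t0, t0)) : w = v := by
  induction w generalizing v with
  | nil =>
    cases v with
    | nil => rfl
    | cons d v => exact absurd h.symm (step_t0 _ _)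
  | cons c w ih =>
    cases v with
    | nil => exact absurd h (step_t0 _ _)
    | cons d v =>
      have h' : step c (act w (t0, t0)) = step d (act v (t0, t0)) := h
      have hcd : c = d := by
        cases c <;> cases d
        · rfl
        · exact absurd h'.symm (step_tf _ _)
        · exact absurd h' (step_tf _ _)
        · rfl
      subst hcd
      rw [ih v (step_inj c h')]

abbrev evp (p : FreeShelf Unit × FreeShelf Unit) : T × T := (ev p.1, ev p.2)

theorem evp_act (w : List Bool) (p : FreeShelf Unit × FreeShelf Unit) :
    evp (act w p) = act w (evp p) := by
  induction w with
  | nil => rfl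
  | cons c w ih =>
    show evp (step c (act w p)) = step c (act w (evp p))
    rw [← ih]
    cases c <;> simp [step, ev_mul]

abbrev P := PresentedMonoid vb2Rels
abbrev sg : P := PresentedMonoid.of vb2Rels false
abbrev zt : P := PresentedMonoid.of vb2Rels true

theorem zt_zt : zt * zt = 1 :=
  PresentedMonoid.mk_eq_mk_of_rel (rels := vb2Rels) ⟨rfl, rfl⟩

def letter (c : Bool) : P := if c then zt * sg else sg * zt

def wd (w : List Bool) : P := (w.map letter).prod

def zp (e : Bool) : P := if e then zt else 1

theorem normal (m : P) : ∃ w e, m = wd w * zp e := by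
  have hm : m ∈ Submonoid.closure (Set.range (PresentedMonoid.of vb2Rels)) := by
    rw [PresentedMonoid.closure_range_of]; trivial
  induction hm using Submonoid.closure_induction_right with
  | one => exact ⟨[], false, by simp [wd, zp]⟩
  | mul_right m _ y hy ih =>
    obtain ⟨w, e, rfl⟩ := ih
    obtain ⟨c, rfl⟩ := hy
    cases c <;> cases e
    · refine ⟨w ++ [false], true, ?_⟩
      simp [wd, zp, letter, mul_assoc, zt_zt]
    · refine ⟨w ++ [true], false, ?_⟩
      simp [wd, zp, letter, mul_assoc]
    · exact ⟨w, true, by simp [zp]⟩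
    · exact ⟨w, false, by simp [zp, mul_assoc, zt_zt]⟩

end VBProof

/-- The monoid homomorphism `ρ : VB_2^+ → End(FS_1 × FS_1)` determined
by `ρ(σ)(a,b) = (b, a ◁ b)` and `ρ(ζ)(a,b) = (b,a)` is injective. -/
theorem stmt11 :
    ∃ ρ : PresentedMonoid vb2Rels →* Function.End (FreeShelf Unit × FreeShelf Unit),
      ρ (PresentedMonoid.of vb2Rels false) = (fun p => (p.2, p.1 * p.2)) ∧
      ρ (PresentedMonoid.of vb2Rels true) = Prod.swap ∧
      Function.Injective ρ := by
  classical
  let f : Bool → Function.End (FreeShelf Unit × FreeShelf Unit) := fun c =>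
    if c then Prod.swap else fun p => (p.2, p.1 * p.2)
  have hf : ∀ a b, vb2Rels a b → FreeMonoid.lift f a = FreeMonoid.lift f b := by
    rintro a b ⟨rfl, rfl⟩
    rw [map_mul, map_one, FreeMonoid.lift_eval_of]
    funext p
    rfl
  let ρ := PresentedMonoid.lift f hf
  have hs : ρ (PresentedMonoid.of vb2Rels false) = (fun p => (p.2, p.1 * p.2)) :=
    PresentedMonoid.lift_of f hf
  have hz : ρ (PresentedMonoid.of vb2Rels true) = Prod.swap :=
    PresentedMonoid.lift_of f hf
  refine ⟨ρ, hs, hz, ?_⟩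
  have hl : ∀ c, ρ (VBProof.letter c) = VBProof.step c := by
    intro c
    cases c
    · show ρ (VBProof.sg * VBProof.zt) = _
      rw [map_mul, hs, hz]; rfl
    · show ρ (VBProof.zt * VBProof.sg) = _
      rw [map_mul, hs, hz]; rfl
  have hw : ∀ w p, ρ (VBProof.wd w) p = VBProof.act w p := by
    intro w p
    induction w with
    | nil => show ρ 1 p = p; rw [map_one]; rfl
    | cons c w ih =>
      have : VBProof.wd (c :: w) = VBProof.letter c * VBProof.wd w := by simp [VBProof.wd]
      rw [this, map_mul, hl]
      show VBProof.step c (ρ (VBProof.wd w) p) = VBProof.step c (VBProof.act w p)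
      rw [ih]
  have hT : ∀ w p, ρ (VBProof.wd w * VBProof.zp true) p = VBProof.act w p.swap := by
    intro w p
    rw [map_mul, ← hw]
    show ρ (VBProof.wd w) (ρ VBProof.zt p) = _
    rw [hz]
  have hF : ∀ w p, ρ (VBProof.wd w * VBProof.zp false) p = VBProof.act w p := by
    intro w p
    rw [← hw]
    show ρ (VBProof.wd w * 1) p = _
    rw [mul_one]
  have hne : ∀ w, ρ (VBProof.wd w * VBProof.zp true) ≠ ρ (VBProof.wd w * VBProof.zp false) := by
    intro w h
    have h1 := congrArg VBProof.evp (congrFun h (VBProof.gen, VBProof.gen * VBProof.gen))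
    rw [hT, hF, VBProof.evp_act, VBProof.evp_act] at h1
    have h2 := congrArg Prod.snd (VBProof.act_inj w h1)
    have h3 : VBProof.ev VBProof.gen = VBProof.ev (VBProof.gen * VBProof.gen) := h2
    rw [VBProof.ev_mul, VBProof.ev_gen] at h3
    exact VBProof.T_irred _ _ h3
  intro m n hmn
  obtain ⟨w, e, rfl⟩ := VBProof.normal m
  obtain ⟨v, d, rfl⟩ := VBProof.normal n
  have hg : ∀ w e, VBProof.evp (ρ (VBProof.wd w * VBProof.zp e) (VBProof.gen, VBProof.gen)) =
      VBProof.act w (VBProof.t0, VBProof.t0) := by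
    intro w e
    cases e
    · rw [hF, VBProof.evp_act]; rfl
    · rw [hT, VBProof.evp_act]; rfl
  have hwv : w = v := by
    apply VBProof.act_t0
    rw [← hg w e, ← hg v d, hmn]
  subst hwv
  cases e <;> cases d
  · rfl
  · exact absurd hmn.symm (hne w)
  · exact absurd hmn (hne w)
  · rfl
end

section
/- Let FS_1 be the free shelf on one generator, let n ≥ 2, and let ρ : B_n^+ → End((FS_1)^n) be the monoid homomorphism given by ρ(σ_i)(a_1,…,a_n) = (a_1,…,a_{i−1}, a_{i+1}, a_i◁a_{i+1}, a_{i+2},…,a_n). Then the corresponding action of B_n^+ on (FS_1)^n is free: for all α, β ∈ B_n^+, if there exists a tuple a ∈ (FS_1)^n with ρ(α)(a) = ρ(β)(a), then α = β. -/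
/-- `T_i(a) = (…, a_{i+1}, a_i ◁ a_{i+1}, …)` on `S^{m+1}`. -/
def braidMap {S : Type*} (op : S → S → S) {m : ℕ} (i : Fin m) (a : Fin (m + 1) → S) :
    Fin (m + 1) → S :=
  Function.update (Function.update a i.castSucc (a i.succ)) i.succ
    (op (a i.castSucc) (a i.succ))

/-- The defining relations of the positive braid monoid `B_{m+1}^+`. -/
def braidRels (m : ℕ) : FreeMonoid (Fin m) → FreeMonoid (Fin m) → Prop := fun a b =>
  (∃ i j : Fin m, (i : ℕ) + 2 ≤ (j : ℕ) ∧
      a = FreeMonoid.of i * FreeMonoid.of j ∧ b = FreeMonoid.of j * FreeMonoid.of i) ∨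
  (∃ i j : Fin m, (i : ℕ) + 1 = (j : ℕ) ∧
      a = FreeMonoid.of i * FreeMonoid.of j * FreeMonoid.of i ∧
      b = FreeMonoid.of j * FreeMonoid.of i * FreeMonoid.of j)

namespace BraidFree

/-- Braid relations on infinitely many strands. -/
def relsN : FreeMonoid ℕ → FreeMonoid ℕ → Prop := fun a b =>
  (∃ i j : ℕ, i + 2 ≤ j ∧
      a = FreeMonoid.of i * FreeMonoid.of j ∧ b = FreeMonoid.of j * FreeMonoid.of i) ∨
  (∃ i j : ℕ, i + 1 = j ∧
      a = FreeMonoid.of i * FreeMonoid.of j * FreeMonoid.of i ∧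
      b = FreeMonoid.of j * FreeMonoid.of i * FreeMonoid.of j)

/-- The positive braid monoid on infinitely many strands. -/
abbrev P := PresentedMonoid relsN

/-- The generators. -/
def s (i : ℕ) : P := PresentedMonoid.of relsN i

def far (i j : ℕ) : Prop := i + 2 ≤ j ∨ j + 2 ≤ i
def adj (i j : ℕ) : Prop := i + 1 = j ∨ j + 1 = i

lemma far.symm {i j : ℕ} (h : far i j) : far j i := Or.symm h
lemma adj.symm {i j : ℕ} (h : adj i j) : adj j i := Or.symm h

lemma tri (i j : ℕ) : i = j ∨ far i j ∨ adj i j := by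
  unfold far adj; omega

lemma s_far {i j : ℕ} (h : far i j) : s i * s j = s j * s i := by
  have key : ∀ i j : ℕ, i + 2 ≤ j → s i * s j = s j * s i := fun i j h =>
    PresentedMonoid.mk_eq_mk_of_rel (rels := relsN)
      (x := FreeMonoid.of i * FreeMonoid.of j) (y := FreeMonoid.of j * FreeMonoid.of i)
      (Or.inl ⟨i, j, h, rfl, rfl⟩)
  rcases h with h | h
  · exact key _ _ h
  · exact (key _ _ h).symm

lemma s_adj {i j : ℕ} (h : adj i j) : s i * s j * s i = s j * s i * s j := by
  have key : ∀ i j : ℕ, i + 1 = j → s i * s j * s i = s j * s i * s j := fun i j h =>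
    PresentedMonoid.mk_eq_mk_of_rel (rels := relsN)
      (x := FreeMonoid.of i * FreeMonoid.of j * FreeMonoid.of i)
      (y := FreeMonoid.of j * FreeMonoid.of i * FreeMonoid.of j)
      (Or.inr ⟨i, j, h, rfl, rfl⟩)
  rcases h with h | h
  · exact key _ _ h
  · exact (key _ _ h).symm

lemma far' {i j : ℕ} (h : far i j) (x : P) : s i * (s j * x) = s j * (s i * x) := by
  rw [← mul_assoc, s_far h, mul_assoc]

lemma adj' {i j : ℕ} (h : adj i j) (x : P) :
    s i * (s j * (s i * x)) = s j * (s i * (s j * x)) := by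
  have := congrArg (· * x) (s_adj h)
  simpa only [mul_assoc] using this

/-- Lifting maps out of `P`. -/
def liftP {M : Type*} [Monoid M] (f : ℕ → M)
    (h1 : ∀ i j, i + 2 ≤ j → f i * f j = f j * f i)
    (h2 : ∀ i, f i * f (i + 1) * f i = f (i + 1) * f i * f (i + 1)) : P →* M :=
  PresentedMonoid.lift f (by
    rintro a b (⟨i, j, h, rfl, rfl⟩ | ⟨i, j, rfl, rfl, rfl⟩)
    · simpa using h1 i j h
    · simpa using h2 i)

lemma liftP_s {M : Type*} [Monoid M] (f : ℕ → M) (h1) (h2) (i : ℕ) :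
    liftP f h1 h2 (s i) = f i := rfl

lemma P_induction {p : P → Prop} (h1 : p 1) (hs : ∀ i x, p x → p (s i * x)) (x : P) : p x := by
  refine PresentedMonoid.inductionOn x fun a => ?_
  induction a using FreeMonoid.inductionOn' with
  | one => exact h1
  | of_mul i a ih => rw [map_mul]; exact hs _ _ ih

/-- The length homomorphism. -/
def lenHom : P →* Multiplicative ℕ :=
  liftP (fun _ => Multiplicative.ofAdd 1) (fun _ _ _ => rfl) (fun _ => rfl)

def len (x : P) : ℕ := Multiplicative.toAdd (lenHom x)

lemma len_s_mul (i : ℕ) (x : P) : len (s i * x) = len x + 1 := by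
  unfold len
  rw [map_mul, toAdd_mul, add_comm]
  rfl

/-- Garside's lemma, as a relation. -/
def R (i : ℕ) (X : P) (k : ℕ) (Y : P) : Prop :=
  (i = k ∧ X = Y) ∨ (far i k ∧ ∃ Z, X = s k * Z ∧ Y = s i * Z) ∨
    (adj i k ∧ ∃ Z, X = s k * (s i * Z) ∧ Y = s i * (s k * Z))

lemma R.symm {i k X Y} (h : R i X k Y) : R k Y i X := by
  rcases h with ⟨rfl, rfl⟩ | ⟨h, Z, rfl, rfl⟩ | ⟨h, Z, rfl, rfl⟩
  · exact Or.inl ⟨rfl, rfl⟩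
  · exact Or.inr (Or.inl ⟨h.symm, Z, rfl, rfl⟩)
  · exact Or.inr (Or.inr ⟨h.symm, Z, rfl, rfl⟩)

lemma R.mul {i k X Y} (h : R i X k Y) (w : P) : R i (X * w) k (Y * w) := by
  rcases h with ⟨rfl, rfl⟩ | ⟨h, Z, rfl, rfl⟩ | ⟨h, Z, rfl, rfl⟩
  · exact Or.inl ⟨rfl, rfl⟩
  · exact Or.inr (Or.inl ⟨h, Z * w, by simp only [mul_assoc], by simp only [mul_assoc]⟩)
  · exact Or.inr (Or.inr ⟨h, Z * w, by simp only [mul_assoc], by simp only [mul_assoc]⟩)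

lemma R.of_eq {i X Y} (h : R i X i Y) : X = Y := by
  rcases h with ⟨_, h⟩ | ⟨h, _⟩ | ⟨h, _⟩
  · exact h
  · unfold far at h; omega
  · unfold adj at h; omega

lemma R.of_far {i k X Y} (h : R i X k Y) (f : far i k) : ∃ Z, X = s k * Z ∧ Y = s i * Z := by
  rcases h with ⟨h, _⟩ | ⟨h, h'⟩ | ⟨h, _⟩
  · unfold far at f; omega
  · exact h'
  · unfold far at f; unfold adj at h; omega

lemma R.of_adj {i k X Y} (h : R i X k Y) (f : adj i k) :
    ∃ Z, X = s k * (s i * Z) ∧ Y = s i * (s k * Z) := by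
  rcases h with ⟨h, _⟩ | ⟨h, _⟩ | ⟨h, h'⟩
  · unfold adj at f; omega
  · unfold adj at f; unfold far at h; omega
  · exact h'

/-- The induction hypothesis of Garside's lemma. -/
def H (n : ℕ) : Prop := ∀ i k X Y, len X < n → s i * X = s k * Y → R i X k Y

lemma R_far_adj {n} (hn : H n) {i p k X V Y} (hl : len V ≤ n)
    (h1 : R i X p V) (h2 : R p V k Y) (f1 : far i p) (f2 : adj p k) : R i X k Y := by
  obtain ⟨Z, rfl, rfl⟩ := h1.of_far f1
  obtain ⟨Z', hV, rfl⟩ := h2.of_adj f2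
  rw [len_s_mul] at hl
  have lenV := congrArg len hV
  simp only [len_s_mul] at lenV
  have h := hn i k Z _ (by omega) hV
  rcases tri i k with rfl | f | f
  · exfalso; unfold far at f1; unfold adj at f2; omega
  · obtain ⟨W, rfl, hW⟩ := h.of_far f
    obtain ⟨Q, rfl, rfl⟩ := (hn _ _ _ _ (by omega) hW).of_far f1.symm
    refine Or.inr (Or.inl ⟨f, s p * (s k * Q), ?_, ?_⟩)
    · rw [adj' f2]
    · rw [far' f.symm, far' f1.symm]
  · obtain ⟨W, rfl, hW⟩ := h.of_adj f
    simp only [len_s_mul] at lenV hl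
    obtain ⟨Q, rfl, hQ⟩ := (hn _ _ _ _ (by omega) hW).of_far f1.symm
    obtain ⟨S, rfl, rfl⟩ := (hn _ _ _ _ (by omega) hQ).of_adj f2.symm
    refine Or.inr (Or.inr ⟨f, s p * (s k * (s i * S)), ?_, ?_⟩)
    · rw [far' f1, adj' f2, adj' f.symm S, ← far' f1]
    · rw [← adj' f, far' f1.symm, far' f1 S, adj' f2]

lemma R_trans {n} (hn : H n) {i p k X V Y} (hl : len V ≤ n)
    (h1 : R i X p V) (h2 : R p V k Y) : R i X k Y := by
  rcases tri i p with rfl | f1 | f1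
  · rw [h1.of_eq]; exact h2
  · rcases tri p k with rfl | f2 | f2
    · rw [← h2.of_eq]; exact h1
    · obtain ⟨Z, rfl, rfl⟩ := h1.of_far f1
      obtain ⟨Z', hV, rfl⟩ := h2.of_far f2
      rw [len_s_mul] at hl
      have h := hn i k Z _ (by omega) hV
      rcases tri i k with rfl | f | f
      · rw [h.of_eq]; exact Or.inl ⟨rfl, rfl⟩
      · obtain ⟨W, rfl, rfl⟩ := h.of_far f
        exact Or.inr (Or.inl ⟨f, s p * W, far' f2 _, far' f1.symm _⟩)
      · obtain ⟨W, rfl, rfl⟩ := h.of_adj f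
        refine Or.inr (Or.inr ⟨f, s p * W, ?_, ?_⟩)
        · rw [far' f2, far' f1.symm]
        · rw [far' f1.symm, far' f2]
    · exact R_far_adj hn hl h1 h2 f1 f2
  · rcases tri p k with rfl | f2 | f2
    · rw [← h2.of_eq]; exact h1
    · exact (R_far_adj hn hl h2.symm h1.symm f2.symm f1.symm).symm
    · obtain ⟨Z, rfl, rfl⟩ := h1.of_adj f1
      obtain ⟨Z', hV, rfl⟩ := h2.of_adj f2
      rw [len_s_mul] at hl
      have lenV := congrArg len hV
      simp only [len_s_mul] at lenV hl
      have h := hn i k _ _ (by rw [len_s_mul]; omega) hV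
      rcases tri i k with rfl | f | f
      · have := (hn _ _ _ _ (by omega) h.of_eq).of_eq
        rw [this]; exact Or.inl ⟨rfl, rfl⟩
      · obtain ⟨W, hW, hW'⟩ := h.of_far f
        obtain ⟨Q, rfl, rfl⟩ := (hn _ _ _ _ (by omega) hW).of_adj f2
        obtain ⟨Q', rfl, hQ'⟩ := (hn _ _ _ _ (by omega) hW').of_adj f1.symm
        simp only [len_s_mul] at lenV hl
        have hQ := (hn _ _ _ _ (by rw [len_s_mul]; omega) hQ').of_eq
        obtain ⟨S, rfl, rfl⟩ := (hn _ _ _ _ (by omega) hQ).of_far f.symm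
        refine Or.inr (Or.inl ⟨f, s p * (s i * (s k * (s p * S))), ?_, ?_⟩)
        · rw [far' f, adj' f1, adj' f2, far' f.symm]
        · rw [far' f.symm, adj' f2.symm, adj' f1.symm]
      · exfalso; unfold adj at *; omega

lemma of_mul_inj {i k : ℕ} {X Y : FreeMonoid ℕ}
    (h : FreeMonoid.of i * X = FreeMonoid.of k * Y) : i = k ∧ X = Y :=
  List.cons.inj h

lemma word_cases (x : FreeMonoid ℕ) : x = 1 ∨ ∃ p V, x = FreeMonoid.of p * V := by
  induction x using FreeMonoid.inductionOn' with
  | one => exact Or.inl rfl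
  | of_mul i a _ => exact Or.inr ⟨i, a, rfl⟩

lemma mk_len (X : FreeMonoid ℕ) : len (PresentedMonoid.mk relsN X) = X.length := by
  induction X using FreeMonoid.inductionOn' with
  | one => rfl
  | of_mul i a ih =>
    rw [map_mul]
    refine (len_s_mul _ _).trans ?_
    rw [ih, FreeMonoid.length_mul, FreeMonoid.length_of, add_comm]

lemma garside_step (n : ℕ) (hn : H n) {u v : FreeMonoid ℕ} (huv : ConGen.Rel relsN u v) :
    u.length = v.length ∧ (u.length ≤ n + 1 → ∀ i X k Y, u = FreeMonoid.of i * X →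
      v = FreeMonoid.of k * Y →
      R i (PresentedMonoid.mk relsN X) k (PresentedMonoid.mk relsN Y)) := by
  induction huv with
  | of x y h =>
    rcases h with ⟨i, j, h, rfl, rfl⟩ | ⟨i, j, h, rfl, rfl⟩
    · refine ⟨rfl, fun _ i' X k' Y e1 e2 => ?_⟩
      obtain ⟨rfl, rfl⟩ := of_mul_inj e1
      obtain ⟨rfl, rfl⟩ := of_mul_inj e2
      exact Or.inr (Or.inl ⟨Or.inl h, 1, (mul_one _).symm, (mul_one _).symm⟩)
    · refine ⟨rfl, fun _ i' X k' Y e1 e2 => ?_⟩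
      rw [mul_assoc] at e1 e2
      obtain ⟨rfl, rfl⟩ := of_mul_inj e1
      obtain ⟨rfl, rfl⟩ := of_mul_inj e2
      refine Or.inr (Or.inr ⟨Or.inl h, 1, ?_, ?_⟩)
      · rw [mul_one]; rfl
      · rw [mul_one]; rfl
  | refl x =>
    refine ⟨rfl, fun _ i X k Y e1 e2 => ?_⟩
    obtain ⟨rfl, rfl⟩ := of_mul_inj (e1.symm.trans e2)
    exact Or.inl ⟨rfl, rfl⟩
  | symm _ ih =>
    exact ⟨ih.1.symm, fun hl i X k Y e1 e2 => (ih.2 (ih.1 ▸ hl) _ _ _ _ e2 e1).symm⟩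
  | @trans x y z _ _ ih1 ih2 =>
    refine ⟨ih1.1.trans ih2.1, fun hl i X k Y e1 e2 => ?_⟩
    rcases word_cases y with rfl | ⟨p, V, rfl⟩
    · have := ih1.1
      rw [e1] at this
      simp at this
    · have hl' := hl
      rw [ih1.1] at hl'
      refine R_trans hn ?_ (ih1.2 hl _ _ _ _ e1 rfl) (ih2.2 hl' _ _ _ _ rfl e2)
      rw [mk_len]
      simp at hl'
      omega
  | @mul w x y z h1 h2 ih1 ih2 =>
    refine ⟨by simp [ih1.1, ih2.1], fun hl i X k Y e1 e2 => ?_⟩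
    rw [FreeMonoid.length_mul] at hl
    rcases word_cases w with rfl | ⟨p, V, rfl⟩
    · have hx : x = 1 := by
        have := ih1.1
        simpa [eq_comm] using this
      subst hx
      rw [one_mul] at e1 e2
      exact ih2.2 (by omega) _ _ _ _ e1 e2
    · rcases word_cases x with rfl | ⟨q, U, rfl⟩
      · have := ih1.1
        simp at this
      rw [mul_assoc] at e1 e2
      obtain ⟨rfl, rfl⟩ := of_mul_inj e1
      obtain ⟨rfl, rfl⟩ := of_mul_inj e2
      rw [map_mul, map_mul]
      have e : PresentedMonoid.mk relsN z = PresentedMonoid.mk relsN y :=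
        (PresentedMonoid.mk_eq_mk_iff.2 h2).symm
      rw [e]
      exact (ih1.2 (by omega) _ _ _ _ rfl rfl).mul _


theorem garside (n : ℕ) : H n := by
  induction n with
  | zero => intro i k X Y h; omega
  | succ n ih =>
    intro i k X Y
    refine PresentedMonoid.inductionOn₂ X Y fun a b hl h => ?_
    rw [mk_len] at hl
    have h' : PresentedMonoid.mk relsN (FreeMonoid.of i * a)
        = PresentedMonoid.mk relsN (FreeMonoid.of k * b) := by
      rw [map_mul, map_mul]; exact h
    refine (garside_step n ih (PresentedMonoid.mk_eq_mk_iff.1 h')).2 ?_ _ _ _ _ rfl rfl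
    rw [FreeMonoid.length_mul, FreeMonoid.length_of]
    omega

theorem left_cancel (c : P) : ∀ a b : P, c * a = c * b → a = b := by
  induction c using P_induction with
  | h1 => intro a b h; simpa using h
  | hs i x ih =>
    intro a b h
    rw [mul_assoc, mul_assoc] at h
    exact ih _ _ (garside _ _ _ _ _ (Nat.lt_succ_self _) h).of_eq

/-- The reversing anti-automorphism. -/
def rev : P →* Pᵐᵒᵖ :=
  liftP (fun i => MulOpposite.op (s i))
    (fun i j h => by
      rw [← MulOpposite.op_mul, ← MulOpposite.op_mul, s_far (Or.inl h)])
    (fun i => by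
      simp only [← MulOpposite.op_mul, ← mul_assoc]
      rw [s_adj (Or.inl rfl)])

lemma rev_rev (x : P) : (rev (rev x).unop).unop = x := by
  induction x using P_induction with
  | h1 => simp
  | hs i x ih =>
    have e : rev (s i) = MulOpposite.op (s i) := rfl
    rw [map_mul, MulOpposite.unop_mul, map_mul, MulOpposite.unop_mul, ih, e, MulOpposite.unop_op,
      e, MulOpposite.unop_op]

theorem right_cancel (a b c : P) (h : a * c = b * c) : a = b := by
  have h1 := congrArg (fun x => (rev x).unop) h
  simp only [map_mul, MulOpposite.unop_mul] at h1
  have h2 := left_cancel _ _ _ h1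
  rw [← rev_rev a, h2, rev_rev]

/-- `d n = s 0 * s 1 * ... * s (n-1)`. -/
def d : ℕ → P
  | 0 => 1
  | n + 1 => d n * s n

lemma d_comm_far (n i : ℕ) (h : n < i) : d n * s i = s i * d n := by
  induction n with
  | zero => simp [d]
  | succ n ih =>
    rw [d, mul_assoc, s_far (Or.inl (by omega)), ← mul_assoc, ih (by omega), mul_assoc]

lemma d_shift (n i : ℕ) (h : i + 1 < n) : d n * s i = s (i + 1) * d n := by
  induction n with
  | zero => omega
  | succ n ih =>
    rcases Nat.lt_or_ge (i + 1) n with h' | h'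
    · rw [d, mul_assoc, s_far (Or.inr (by omega)), ← mul_assoc, ih h', mul_assoc]
    · obtain rfl : n = i + 1 := by omega
      rw [d, d]
      calc d i * s i * s (i + 1) * s i = d i * (s i * s (i + 1) * s i) := by
            simp only [mul_assoc]
        _ = d i * (s (i + 1) * s i * s (i + 1)) := by rw [s_adj (Or.inl rfl)]
        _ = (d i * s (i + 1)) * s i * s (i + 1) := by simp only [mul_assoc]
        _ = _ := by rw [d_comm_far i (i + 1) (by omega)]; simp only [mul_assoc]

/-- The shifted product s 1 * ... * s n. -/
def d' : ℕ → P
  | 0 => 1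
  | n + 1 => d' n * s (n + 1)

lemma d_eq (n : ℕ) : d (n + 1) = s 0 * d' n := by
  induction n with
  | zero => simp [d, d']
  | succ n ih => rw [d, ih, d', mul_assoc]

lemma d_d (n k : ℕ) (h : k < n) : d n * d k = d' k * d n := by
  induction k with
  | zero => simp [d, d']
  | succ k ih => rw [d, d', ← mul_assoc, ih (by omega), mul_assoc, d_shift n k h, mul_assoc]

lemma d_sq (n : ℕ) : d (n + 1) ^ 2 * s n = s 0 * d (n + 1) ^ 2 := by
  have h : d (n + 1) * d (n + 1) = d' n * d (n + 1) * s n := by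
    conv_lhs => rw [show d (n + 1) * d (n + 1) = d (n + 1) * d n * s n by
      rw [mul_assoc]; rfl]
    rw [d_d _ _ (Nat.lt_succ_self n)]
  have e : s 0 * (d (n + 1) * d (n + 1)) = d (n + 1) * d (n + 1) * s n := by
    rw [h, ← mul_assoc, ← mul_assoc, ← d_eq, ← h]
  rw [pow_two, e]

lemma d_pow_shift (n i j : ℕ) (h : i + j < n) : d n ^ j * s i = s (i + j) * d n ^ j := by
  induction j with
  | zero => simp
  | succ j ih =>
    rw [pow_succ', mul_assoc, ih (by omega), ← mul_assoc, d_shift n _ (by omega), mul_assoc]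
    rfl

/-- The full twist. -/
def Zt (n : ℕ) : P := d (n + 1) ^ (n + 2)

lemma Zt_comm (n i : ℕ) (h : i ≤ n) : Zt n * s i = s i * Zt n := by
  have e : Zt n = d (n + 1) ^ i * (d (n + 1) ^ 2 * d (n + 1) ^ (n - i)) := by
    rw [Zt, ← pow_add, ← pow_add]; congr 1; omega
  have h1 := d_pow_shift (n + 1) i (n - i) (by omega)
  have h2 := d_pow_shift (n + 1) 0 i (by omega)
  rw [show i + (n - i) = n by omega] at h1
  rw [zero_add] at h2
  rw [e, mul_assoc, mul_assoc, h1, ← mul_assoc (_ ^ 2), d_sq, mul_assoc (s 0), ← mul_assoc _ (s 0),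
    h2, mul_assoc]

lemma Zt_div (n i : ℕ) (h : i ≤ n) : ∃ v, Zt n = v * s i := by
  have h1 := d_pow_shift (n + 1) i (n - i) (by omega)
  rw [show i + (n - i) = n by omega] at h1
  refine ⟨d (n + 1) ^ (i + 1) * (d n * d (n + 1) ^ (n - i)), ?_⟩
  rw [mul_assoc, mul_assoc, h1, ← mul_assoc (d n)]
  change _ = _ * (d (n + 1) * _)
  rw [Zt, ← pow_succ', ← pow_add]
  congr 1; omega

lemma Zt_comm_all (r : P) : ∃ N, ∀ n, N ≤ n → Zt n * r = r * Zt n := by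
  induction r using P_induction with
  | h1 => exact ⟨0, fun n _ => by simp⟩
  | hs i x ih =>
    obtain ⟨N, hN⟩ := ih
    refine ⟨max N i, fun n hn => ?_⟩
    rw [← mul_assoc, Zt_comm n i (le_trans (le_max_right _ _) hn), mul_assoc,
      hN n (le_trans (le_max_left _ _) hn), mul_assoc]

theorem ore (t : P) : ∀ r : P, ∃ c e : P, c * r = e * t := by
  induction t using P_induction with
  | h1 => exact fun r => ⟨1, r, by simp⟩
  | hs i x ih =>
    intro r
    obtain ⟨c, e, h⟩ := ih r
    obtain ⟨N, hN⟩ := Zt_comm_all e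
    obtain ⟨v, hv⟩ := Zt_div (max N i) i (le_max_right _ _)
    refine ⟨Zt (max N i) * c, e * v, ?_⟩
    rw [mul_assoc, h, ← mul_assoc, hN _ (le_max_left _ _), hv]
    simp only [mul_assoc]

noncomputable instance oreTop : OreLocalization.OreSet (⊤ : Submonoid P) where
  ore_right_cancel a b c h := ⟨1, by rw [right_cancel a b c h]⟩
  oreNum r t := (ore t r).choose_spec.choose
  oreDenom r t := ⟨(ore t r).choose, trivial⟩
  ore_eq r t := (ore t r).choose_spec.choose_spec

/-- The group of fractions of `P` receives `P` injectively. -/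
noncomputable def toLoc : P →* OreLocalization (⊤ : Submonoid P) P :=
  OreLocalization.numeratorHom

lemma toLoc_inj : Function.Injective toLoc := by
  intro a b h
  obtain ⟨u, v, h1, h2⟩ := OreLocalization.oreDiv_eq_iff.1 h
  have h3 : (u : P) = v := by simpa using h2
  rw [← h3] at h1
  exact (left_cancel _ _ _ h1).symm

noncomputable def unitOf (x : P) : (OreLocalization (⊤ : Submonoid P) P)ˣ :=
  OreLocalization.numeratorUnit ⟨x, trivial⟩

lemma unitOf_val (x : P) : (unitOf x : OreLocalization (⊤ : Submonoid P) P) = toLoc x := rfl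

/-- The braid group on infinitely many strands. -/
def relsG : Set (FreeGroup ℕ) :=
  {r | (∃ i j : ℕ, i + 2 ≤ j ∧ r = (FreeGroup.of i * FreeGroup.of j) *
      (FreeGroup.of j * FreeGroup.of i)⁻¹) ∨
    (∃ i : ℕ, r = (FreeGroup.of i * FreeGroup.of (i + 1) * FreeGroup.of i) *
      (FreeGroup.of (i + 1) * FreeGroup.of i * FreeGroup.of (i + 1))⁻¹)}

abbrev G := PresentedGroup relsG

def g (i : ℕ) : G := PresentedGroup.of i

lemma g_far (i j : ℕ) (h : i + 2 ≤ j) : g i * g j = g j * g i :=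
  PresentedGroup.mk_eq_mk_of_mul_inv_mem (rels := relsG)
    (x := FreeGroup.of i * FreeGroup.of j) (y := FreeGroup.of j * FreeGroup.of i)
    (Or.inl ⟨i, j, h, rfl⟩)

lemma g_adj (i : ℕ) : g i * g (i + 1) * g i = g (i + 1) * g i * g (i + 1) :=
  PresentedGroup.mk_eq_mk_of_mul_inv_mem (rels := relsG)
    (x := FreeGroup.of i * FreeGroup.of (i + 1) * FreeGroup.of i)
    (y := FreeGroup.of (i + 1) * FreeGroup.of i * FreeGroup.of (i + 1))
    (Or.inr ⟨i, rfl⟩)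

def liftG {M : Type*} [Group M] (f : ℕ → M)
    (h1 : ∀ i j, i + 2 ≤ j → f i * f j = f j * f i)
    (h2 : ∀ i, f i * f (i + 1) * f i = f (i + 1) * f i * f (i + 1)) : G →* M :=
  PresentedGroup.toGroup (f := f) (by
    rintro r (⟨i, j, h, rfl⟩ | ⟨i, rfl⟩)
    · rw [map_mul, map_inv, mul_inv_eq_one]
      simpa using h1 i j h
    · rw [map_mul, map_inv, mul_inv_eq_one]
      simpa using h2 i)

lemma liftG_g {M : Type*} [Group M] (f : ℕ → M) (h1) (h2) (i : ℕ) :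
    liftG f h1 h2 (g i) = f i := PresentedGroup.toGroup.of _

/-- The canonical map from `P` to `G`. -/
def toG : P →* G := liftP g g_far g_adj

noncomputable def fromG : G →* (OreLocalization (⊤ : Submonoid P) P)ˣ :=
  liftG (fun i => unitOf (s i))
    (fun i j h => by
      apply Units.ext
      simp only [Units.val_mul, unitOf_val, ← map_mul]
      rw [s_far (Or.inl h)])
    (fun i => by
      apply Units.ext
      simp only [Units.val_mul, unitOf_val, ← map_mul]
      rw [s_adj (Or.inl rfl)])

lemma toG_inj : Function.Injective toG := by
  have h : ∀ x, ((fromG (toG x) : _ˣ) : OreLocalization (⊤ : Submonoid P) P) = toLoc x := by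
    intro x
    induction x using P_induction with
    | h1 => simp
    | hs i x ih =>
      have e : fromG (toG (s i)) = unitOf (s i) := liftG_g _ _ _ _
      rw [map_mul, map_mul, map_mul, Units.val_mul, ih, e, unitOf_val]
  intro a b hab
  apply toLoc_inj
  rw [← h, ← h, hab]

/-- The shift endomorphism. -/
def sh : G →* G := liftG (fun i => g (i + 1)) (fun i j h => g_far _ _ (by omega))
  (fun i => g_adj _)

lemma sh_g (i : ℕ) : sh (g i) = g (i + 1) := liftG_g _ _ _ _

lemma g0_comm (x : G) : sh (sh x) * g 0 = g 0 * sh (sh x) := by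
  have : x ∈ (Subgroup.centralizer {g 0}).comap (sh.comp sh) := by
    refine PresentedGroup.generated_by relsG _ (fun i => ?_) x
    change sh (sh (g i)) ∈ Subgroup.centralizer {g 0}
    rw [sh_g, sh_g, Subgroup.mem_centralizer_singleton_iff]
    exact (g_far 0 (i + 2) (by omega)).symm
  exact Subgroup.mem_centralizer_singleton_iff.1 this

/-- The braid shelf operation. -/
def br (a b : G) : G := (sh b)⁻¹ * g 0 * sh a * b

lemma br_sd (a b c : G) : br (br a b) c = br (br a c) (br b c) := by
  have e1 : g 0 * sh (sh a) = sh (sh a) * g 0 := (g0_comm a).symm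
  have e2 : (sh (sh b))⁻¹ * g 0 = g 0 * (sh (sh b))⁻¹ := by
    have := g0_comm b⁻¹
    simpa using this
  have e3 : sh (sh c) * g 0 = g 0 * sh (sh c) := g0_comm c
  have e4 : (g 1)⁻¹ * g 0 * g 1 * g 0 = g 0 * g 1 := by
    have := g_adj 0
    rw [zero_add] at this
    rw [mul_assoc, mul_assoc, inv_mul_eq_iff_eq_mul, ← mul_assoc, this, mul_assoc]
  simp only [br, map_mul, map_inv, sh_g, zero_add]
  symm
  calc _ = (sh c)⁻¹ * (sh (sh b))⁻¹ * (g 1)⁻¹ * (sh (sh c) * g 0) * (sh (sh c))⁻¹ * g 1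
            * (sh (sh a) * g 0) * sh b * c := by group
    _ = (sh c)⁻¹ * (sh (sh b))⁻¹ * ((g 1)⁻¹ * g 0 * g 1 * g 0) * sh (sh a) * sh b * c := by
      rw [e3, ← e1]; group
    _ = (sh c)⁻¹ * ((sh (sh b))⁻¹ * g 0) * g 1 * sh (sh a) * sh b * c := by
      rw [e4]; group
    _ = _ := by rw [e2]; group

/-- Evaluation of terms in the braid shelf. -/
def ev0 : FreeMagma Unit → G
  | .of _ => 1
  | .mul a b => br (ev0 a) (ev0 b)

lemma ev0_mul (a b : FreeMagma Unit) : ev0 (a * b) = br (ev0 a) (ev0 b) := rfl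

lemma ev0_rel {a b : FreeMagma Unit} (h : ConGen.Rel (sdRel Unit) a b) : ev0 a = ev0 b := by
  induction h with
  | of x y h =>
    obtain ⟨t, u, v, rfl, rfl⟩ := h
    simp only [ev0_mul]
    exact br_sd _ _ _
  | refl => rfl
  | symm _ ih => exact ih.symm
  | trans _ _ h1 h2 => exact h1.trans h2
  | mul _ _ h1 h2 => rw [ev0_mul, ev0_mul, h1, h2]

def ev (x : FreeShelf Unit) : G := Con.liftOn x ev0 (fun _ _ h => ev0_rel h)

lemma ev_mul (x y : FreeShelf Unit) : ev (x * y) = br (ev x) (ev y) := by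
  induction x, y using Con.induction_on₂ with | _ x y
  rfl

/-- The product of shifted entries. -/
def Phi : (n : ℕ) → (Fin n → G) → G
  | 0, _ => 1
  | n + 1, a => sh (Phi n (fun i => a i.castSucc)) * a (Fin.last n)

lemma Phi_succ (n : ℕ) (a : Fin (n + 1) → G) :
    Phi (n + 1) a = sh (Phi n (fun i => a i.castSucc)) * a (Fin.last n) := rfl

lemma Phi_braid (m : ℕ) (i : Fin m) (a : Fin (m + 1) → G) :
    Phi (m + 1) (braidMap br i a) = g (i.rev : ℕ) * Phi (m + 1) a := by
  induction m with
  | zero => exact i.elim0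
  | succ m ih =>
    induction i using Fin.lastCases with
    | last =>
      simp only [Phi_succ]
      have h1 : braidMap br (Fin.last m) a (Fin.last (m + 1))
          = br (a (Fin.last m).castSucc) (a (Fin.last (m + 1))) := by
        simp [braidMap]
      have h2 : braidMap br (Fin.last m) a (Fin.last m).castSucc = a (Fin.last (m + 1)) := by
        simp [braidMap, Function.update_apply, Fin.ext_iff]
      have h3 : ∀ j : Fin m, braidMap br (Fin.last m) a j.castSucc.castSucc
          = a j.castSucc.castSucc := by
        intro j
        have := j.isLt
        unfold braidMap
        rw [Function.update_of_ne, Function.update_of_ne]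
        · simp only [ne_eq, Fin.ext_iff, Fin.val_castSucc, Fin.val_last]; omega
        · simp only [ne_eq, Fin.ext_iff, Fin.val_castSucc, Fin.val_last, Fin.val_succ]; omega
      simp only [h1, h2, h3, br, map_mul, Fin.rev_last, Fin.val_zero]
      set y := Phi m (fun j => a j.castSucc.castSucc)
      have := g0_comm y
      calc _ = (sh (sh y) * g 0) * (sh (a (Fin.last m).castSucc) * a (Fin.last (m + 1))) := by
            group
        _ = _ := by rw [this]; group
    | cast i =>
      rw [Phi_succ, Phi_succ (m + 1) a]
      have hi := i.isLt
      have h1 : braidMap br i.castSucc a (Fin.last (m + 1)) = a (Fin.last (m + 1)) := by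
        unfold braidMap
        rw [Function.update_of_ne, Function.update_of_ne]
        · simp only [ne_eq, Fin.ext_iff, Fin.val_castSucc, Fin.val_last]; omega
        · simp only [ne_eq, Fin.ext_iff, Fin.val_castSucc, Fin.val_last, Fin.val_succ]; omega
      have h2 : (fun j : Fin (m + 1) => braidMap br i.castSucc a j.castSucc)
          = braidMap br i (fun j => a j.castSucc) := by
        funext j
        simp [braidMap, Function.update_apply, Fin.ext_iff]
      rw [h1, h2, ih, map_mul, sh_g, mul_assoc]
      congr 2
      simp only [Fin.val_rev, Fin.val_castSucc]
      omega

lemma ev_braid (m : ℕ) (i : Fin m) (a : Fin (m + 1) → FreeShelf Unit) :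
    (fun j => ev (braidMap (· * ·) i a j)) = braidMap br i (fun j => ev (a j)) := by
  funext j
  simp only [braidMap, Function.update_apply]
  split_ifs <;> simp [ev_mul]

/-- The flipped embedding of the finite braid monoid in `P`. -/
def emb (m : ℕ) : PresentedMonoid (braidRels m) →* P :=
  PresentedMonoid.lift (fun i => s (i.rev : ℕ)) (by
    rintro a b (⟨i, j, h, rfl, rfl⟩ | ⟨i, j, h, rfl, rfl⟩)
    · simpa using s_far (i := (i.rev : ℕ)) (j := (j.rev : ℕ))
        (by unfold far; simp only [Fin.val_rev]; omega)
    · simpa using s_adj (i := (i.rev : ℕ)) (j := (j.rev : ℕ))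
        (by unfold adj; simp only [Fin.val_rev]; omega))

lemma fin_far {m : ℕ} {i j : Fin m} (h : (i : ℕ) + 2 ≤ j) :
    PresentedMonoid.of (braidRels m) i * PresentedMonoid.of (braidRels m) j =
      PresentedMonoid.of (braidRels m) j * PresentedMonoid.of (braidRels m) i :=
  PresentedMonoid.mk_eq_mk_of_rel (rels := braidRels m)
      (x := FreeMonoid.of i * FreeMonoid.of j) (y := FreeMonoid.of j * FreeMonoid.of i)
      (Or.inl ⟨i, j, h, rfl, rfl⟩)

lemma fin_adj {m : ℕ} {i j : Fin m} (h : (i : ℕ) + 1 = j) :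
    PresentedMonoid.of (braidRels m) i * PresentedMonoid.of (braidRels m) j *
        PresentedMonoid.of (braidRels m) i =
      PresentedMonoid.of (braidRels m) j * PresentedMonoid.of (braidRels m) i *
        PresentedMonoid.of (braidRels m) j :=
  PresentedMonoid.mk_eq_mk_of_rel (rels := braidRels m)
      (x := FreeMonoid.of i * FreeMonoid.of j * FreeMonoid.of i)
      (y := FreeMonoid.of j * FreeMonoid.of i * FreeMonoid.of j)
      (Or.inr ⟨i, j, h, rfl, rfl⟩)

def retF (m : ℕ) (i : ℕ) : WithZero (PresentedMonoid (braidRels m)) :=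
  if h : i < m then ((PresentedMonoid.of (braidRels m) (Fin.rev ⟨i, h⟩) :
    PresentedMonoid (braidRels m)) : WithZero _) else 0

def ret (m : ℕ) : P →* WithZero (PresentedMonoid (braidRels m)) :=
  liftP (retF m)
    (fun i j h => by
      by_cases hj : j < m
      · have hi : i < m := by omega
        simp only [retF, hi, hj, dite_true, ← WithZero.coe_mul]
        rw [fin_far (i := Fin.rev ⟨j, hj⟩) (j := Fin.rev ⟨i, hi⟩)]
        simp only [Fin.val_rev]; omega
      · simp [retF, hj])
    (fun i => by
      by_cases hj : i + 1 < m
      · have hi : i < m := by omega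
        simp only [retF, hi, hj, dite_true, ← WithZero.coe_mul]
        rw [fin_adj (i := Fin.rev ⟨i + 1, hj⟩) (j := Fin.rev ⟨i, hi⟩)]
        simp only [Fin.val_rev]; omega
      · simp [retF, hj])

lemma ret_emb (m : ℕ) (x : PresentedMonoid (braidRels m)) : ret m (emb m x) = (x : WithZero _) := by
  have : (ret m).comp (emb m) = WithZero.coeMonoidHom := by
    apply PresentedMonoid.ext
    intro i
    change retF m (i.rev : ℕ) = _
    have h : (i.rev : ℕ) < m := i.rev.isLt
    simp only [retF, h, dite_true, Fin.eta, Fin.rev_rev]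
    rfl
  exact DFunLike.congr_fun this x

lemma emb_inj (m : ℕ) : Function.Injective (emb m) := by
  intro a b h
  have := congrArg (ret m) h
  rw [ret_emb, ret_emb] at this
  exact WithZero.coe_injective this

lemma shelf_sd (a b c : FreeShelf Unit) : a * b * c = (a * c) * (b * c) := by
  induction a using Con.induction_on with | _ a
  induction b using Con.induction_on with | _ b
  induction c using Con.induction_on with | _ c
  exact (Con.eq _).2 (ConGen.Rel.of _ _ ⟨a, b, c, rfl, rfl⟩)

lemma act_far {m : ℕ} {i j : Fin m} (h : (i : ℕ) + 2 ≤ j) (a : Fin (m + 1) → FreeShelf Unit) :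
    braidMap (· * ·) i (braidMap (· * ·) j a) = braidMap (· * ·) j (braidMap (· * ·) i a) := by
  funext k
  simp only [braidMap, Function.update_apply, Fin.ext_iff, Fin.val_succ, Fin.val_castSucc]
  split_ifs <;> first | rfl | omega

lemma act_adj {m : ℕ} {i j : Fin m} (h : (i : ℕ) + 1 = j) (a : Fin (m + 1) → FreeShelf Unit) :
    braidMap (· * ·) i (braidMap (· * ·) j (braidMap (· * ·) i a)) =
      braidMap (· * ·) j (braidMap (· * ·) i (braidMap (· * ·) j a)) := by
  have e : j.castSucc = i.succ := by ext; simp [h]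
  funext k
  simp only [braidMap, e]
  simp only [Function.update_apply, Fin.ext_iff, Fin.val_succ, Fin.val_castSucc]
  split_ifs <;> first | rfl | omega | exact shelf_sd _ _ _

/-- The action. -/
def rho (m : ℕ) : PresentedMonoid (braidRels m) →* Function.End (Fin (m + 1) → FreeShelf Unit) :=
  PresentedMonoid.lift (M := Function.End (Fin (m + 1) → FreeShelf Unit))
    (fun i => (braidMap (· * ·) i : (Fin (m + 1) → FreeShelf Unit) → _)) (by
    rintro a b (⟨i, j, h, rfl, rfl⟩ | ⟨i, j, h, rfl, rfl⟩)
    · simp only [map_mul, FreeMonoid.lift_eval_of]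
      funext a
      exact act_far h a
    · simp only [map_mul, FreeMonoid.lift_eval_of]
      funext a
      exact act_adj h a)

lemma Phi_rho (m : ℕ) (x : PresentedMonoid (braidRels m)) (a : Fin (m + 1) → FreeShelf Unit) :
    Phi (m + 1) (fun j => ev (rho m x a j)) =
      toG (emb m x) * Phi (m + 1) (fun j => ev (a j)) := by
  revert a
  refine PresentedMonoid.inductionOn x fun w => ?_
  induction w using FreeMonoid.inductionOn' with
  | one => intro a; simp only [map_one, one_mul]; rfl
  | of_mul i w ih =>
    intro a
    rw [map_mul, map_mul, map_mul, map_mul, mul_assoc, ← ih a]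
    exact (congrArg _ (ev_braid m i _)).trans (Phi_braid m i _)

end BraidFree

open BraidFree in
theorem stmt12 {m : ℕ} (hm : 1 ≤ m) :
    ∃ ρ : PresentedMonoid (braidRels m) →* Function.End (Fin (m + 1) → FreeShelf Unit),
      (∀ i : Fin m, ρ (PresentedMonoid.of (braidRels m) i) = braidMap (· * ·) i) ∧
      ∀ α β : PresentedMonoid (braidRels m),
        (∃ a : Fin (m + 1) → FreeShelf Unit, ρ α a = ρ β a) → α = β := by
  refine ⟨rho m, fun i => rfl, ?_⟩
  rintro α β ⟨a, h⟩
  have h1 := Phi_rho m α a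
  rw [h, Phi_rho m β a] at h1
  exact (emb_inj m (toG_inj (mul_right_cancel h1))).symm
end

section
/- Let R be a commutative ring and H a Hopf algebra over R with multiplication μ, comultiplication Δ, antipode S, which is cocommutative (τ ∘ Δ = Δ, where τ : H ⊗ H → H ⊗ H is the flip x ⊗ y ↦ y ⊗ x) and whose antipode is bijective. Let σ : H ⊗_R H → H ⊗_R H be the R-linear map given in Sweedler notation by σ(x ⊗ y) = y₍₁₎ ⊗ S(y₍₂₎) · x · y₍₃₎, i.e. the composite σ = (id_H ⊗ (μ ∘ (μ ⊗ id_H))) ∘ (id_H ⊗ S ⊗ id_H ⊗ id_H) ∘ P ∘ (id_H ⊗ ((Δ ⊗ id_H) ∘ Δ)), where P is the linear permutation x ⊗ y₁ ⊗ y₂ ⊗ y₃ ↦ y₁ ⊗ y₂ ⊗ x ⊗ y₃. Then σ satisfies the Yang–Baxter equation (σ ⊗ id) ∘ (id ⊗ σ) ∘ (σ ⊗ id) = (id ⊗ σ) ∘ (σ ⊗ id) ∘ (id ⊗ σ) on H ⊗ H ⊗ H, and σ is a linear automorphism of H ⊗ H. -/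
open TensorProduct

namespace YB18

open Coalgebra HopfAlgebra

variable {R : Type*} [CommRing R] {H : Type*} [Ring H] [HopfAlgebra R H]

/-- Convolution product of linear maps. -/
noncomputable def cv {A : Type*} [Ring A] [Algebra R A] (f g : H →ₗ[R] A) : H →ₗ[R] A :=
  LinearMap.mul' R A ∘ₗ TensorProduct.map f g ∘ₗ comul

section cv
variable {A : Type*} [Ring A] [Algebra R A] {B : Type*} [Ring B] [Algebra R B]

lemma cv_apply (f g : H →ₗ[R] A) (y : H) :
    cv f g y = LinearMap.mul' R A (TensorProduct.map f g (comul y)) := rfl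

lemma cv_assoc (f g h : H →ₗ[R] A) : cv (cv f g) h = cv f (cv g h) :=
  congrArg WithConv.ofConv
    (mul_assoc (WithConv.toConv f) (WithConv.toConv g) (WithConv.toConv h))

/-- The convolution unit. -/
noncomputable def cvOne (A : Type*) [Ring A] [Algebra R A] : H →ₗ[R] A :=
  Algebra.linearMap R A ∘ₗ counit

lemma one_cv (f : H →ₗ[R] A) : cv (cvOne A) f = f :=
  congrArg WithConv.ofConv (one_mul (WithConv.toConv f))

lemma cv_one (f : H →ₗ[R] A) : cv f (cvOne A) = f :=
  congrArg WithConv.ofConv (mul_one (WithConv.toConv f))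

lemma hom_cv (φ : A →ₐ[R] B) (f g : H →ₗ[R] A) :
    φ.toLinearMap ∘ₗ cv f g = cv (φ.toLinearMap ∘ₗ f) (φ.toLinearMap ∘ₗ g) := by
  ext y
  simp only [LinearMap.comp_apply, cv_apply]
  induction (comul y : H ⊗[R] H) with
  | zero => simp
  | add a b ha hb => simp only [map_add, ha, hb]
  | tmul a b => simp

lemma hom_one (φ : A →ₐ[R] B) :
    φ.toLinearMap ∘ₗ (cvOne A : H →ₗ[R] A) = cvOne B := by
  ext y; simp [cvOne]

lemma left_cv (a : A) (f g : H →ₗ[R] A) :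
    cv (LinearMap.mulLeft R a ∘ₗ f) g = LinearMap.mulLeft R a ∘ₗ cv f g := by
  ext y
  simp only [LinearMap.comp_apply, cv_apply]
  induction (comul y : H ⊗[R] H) with
  | zero => simp
  | add a b ha hb => simp only [map_add, ha, hb]
  | tmul a b => simp [mul_assoc]

lemma cv_left (a : A) (f g : H →ₗ[R] A) (h : ∀ y, a * f y = f y * a) :
    cv f (LinearMap.mulLeft R a ∘ₗ g) = LinearMap.mulLeft R a ∘ₗ cv f g := by
  ext y
  simp only [LinearMap.comp_apply, cv_apply]
  induction (comul y : H ⊗[R] H) with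
  | zero => simp
  | add a b ha hb => simp only [map_add, ha, hb]
  | tmul b c => simp [← mul_assoc, h]

lemma cv_comm (hc : ∀ y : H, TensorProduct.comm R H H (comul y) = comul y)
    (f g : H →ₗ[R] A) (h : ∀ y z, f y * g z = g z * f y) : cv f g = cv g f := by
  ext y
  simp only [cv_apply]
  conv_rhs => rw [← hc y]
  induction (comul y : H ⊗[R] H) with
  | zero => simp
  | add a b ha hb => simp only [map_add, ha, hb]
  | tmul b c => simp [h]

end cv

lemma S_cv : cv (antipode R) (LinearMap.id : H →ₗ[R] H) = cvOne H :=
  mul_antipode_rTensor_comul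

lemma cv_S : cv (LinearMap.id : H →ₗ[R] H) (antipode R) = cvOne H :=
  mul_antipode_lTensor_comul

/-- `p ⊗ q ↦ (x ↦ S p * x * q)`. -/
noncomputable def act₂ : H ⊗[R] H →ₗ[R] Module.End R H :=
  TensorProduct.lift (LinearMap.mk₂ R
    (fun p q => LinearMap.mulLeft R (antipode R p) ∘ₗ LinearMap.mulRight R q)
    (by intros; ext; simp [add_mul]) (by intros; ext; simp)
    (by intros; ext; simp [mul_add]) (by intros; ext; simp))

lemma act₂_tmul (p q x : H) : act₂ (R := R) (p ⊗ₜ q) x = antipode R p * (x * q) := by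
  simp [act₂]

/-- The right adjoint action. -/
noncomputable def act : H →ₗ[R] Module.End R H := act₂ ∘ₗ comul

lemma act_one : act (R := R) (1 : H) = 1 := by
  ext x
  simp [act, Algebra.TensorProduct.one_def, act₂_tmul]

lemma act_mul (a b : H) : act (R := R) (a * b) = act b * act a := by
  simp only [act, LinearMap.comp_apply, Bialgebra.comul_mul]
  induction (comul a : H ⊗[R] H) with
  | zero => simp
  | add s t hs ht => simp only [map_add, add_mul, mul_add, hs, ht]
  | tmul p q =>
    induction (comul b : H ⊗[R] H) with
    | zero => simp
    | add s t hs ht => simp only [map_add, add_mul, mul_add, hs, ht]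
    | tmul r s =>
      ext x
      simp [act₂_tmul, antipode_mul_antidistrib, mul_assoc]

lemma act_flip (x : H) :
    (act (R := R)).flip x = cv (antipode R) (LinearMap.mulLeft R x ∘ₗ LinearMap.id) := by
  ext y
  simp only [LinearMap.flip_apply, act, LinearMap.comp_apply, cv_apply]
  induction (comul y : H ⊗[R] H) with
  | zero => simp
  | add s t hs ht => simp only [map_add, LinearMap.add_apply, hs, ht]
  | tmul p q => simp [act₂_tmul]

/-- `z₁ (y ◁ z₂) = y z`. -/
lemma id_cv_act (x : H) :
    cv LinearMap.id ((act (R := R)).flip x) = LinearMap.mulLeft R x ∘ₗ LinearMap.id := by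
  rw [act_flip, ← cv_assoc, cv_S, one_cv]

/-- Left inclusion. -/
noncomputable abbrev i1 : H →ₐ[R] H ⊗[R] H := Algebra.TensorProduct.includeLeft
/-- Right inclusion. -/
noncomputable abbrev i2 : H →ₐ[R] H ⊗[R] H := Algebra.TensorProduct.includeRight

lemma map_eq_cv (f g : H →ₗ[R] H) :
    TensorProduct.map f g ∘ₗ comul = cv (i1.toLinearMap ∘ₗ f) (i2.toLinearMap ∘ₗ g) := by
  ext y
  simp only [LinearMap.comp_apply, cv_apply]
  induction (comul y : H ⊗[R] H) with
  | zero => simp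
  | add s t hs ht => simp only [map_add, hs, ht]
  | tmul p q => simp

lemma comul_eq_cv : (comul : H →ₗ[R] H ⊗[R] H) = cv i1.toLinearMap i2.toLinearMap := by
  have := map_eq_cv (R := R) (H := H) LinearMap.id LinearMap.id
  simpa using this

/-- Diagonal action. -/
noncomputable def dia : H →ₗ[R] Module.End R (H ⊗[R] H) :=
  TensorProduct.homTensorHomMap (.id R) H H H H ∘ₗ TensorProduct.map act act ∘ₗ comul

lemma dia_tmul (p q : H) :
    (dia (R := R)).flip (p ⊗ₜ q) = TensorProduct.map (act.flip p) (act.flip q) ∘ₗ comul := by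
  ext y
  simp only [LinearMap.flip_apply, dia, LinearMap.comp_apply]
  induction (comul y : H ⊗[R] H) with
  | zero => simp
  | add s t hs ht => simp only [map_add, LinearMap.add_apply, hs, ht]
  | tmul p q => simp

lemma id_cv_i (i : H →ₐ[R] H ⊗[R] H) (p : H) :
    cv i.toLinearMap (i.toLinearMap ∘ₗ act.flip p) = LinearMap.mulLeft R (i p) ∘ₗ i.toLinearMap := by
  have := hom_cv i LinearMap.id ((act (R := R)).flip p)
  rw [id_cv_act] at this
  rw [LinearMap.comp_id, LinearMap.comp_id] at this
  rw [← this]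
  ext; simp

lemma comul_cv_dia (hc : ∀ y : H, TensorProduct.comm R H H (comul y) = comul y)
    (t : H ⊗[R] H) :
    cv comul ((dia (R := R)).flip t) = LinearMap.mulLeft R t ∘ₗ comul := by
  induction t with
  | zero => ext; simp [cv_apply]
  | add s t hs ht =>
    ext y
    have h1 := LinearMap.congr_fun hs y
    have h2 := LinearMap.congr_fun ht y
    simp only [cv_apply, map_add, TensorProduct.map_add_right, LinearMap.add_apply] at h1 h2 ⊢
    rw [h1, h2]; simp [add_mul]
  | tmul p q =>
    rw [dia_tmul, map_eq_cv, comul_eq_cv, cv_assoc, ← cv_assoc i2.toLinearMap,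
      cv_comm hc i2.toLinearMap (i1.toLinearMap ∘ₗ _) (by intros; simp), cv_assoc, ← cv_assoc,
      id_cv_i, id_cv_i, left_cv, cv_left _ _ _ (by intros; simp)]
    ext y
    simp [← mul_assoc]

lemma comul_act (hc : ∀ y : H, TensorProduct.comm R H H (comul y) = comul y)
    (x : H) : comul ∘ₗ (act (R := R)).flip x = dia.flip (comul x) := by
  have key : cv comul (comul ∘ₗ (act (R := R)).flip x) = cv comul (dia.flip (comul x)) := by
    rw [comul_cv_dia hc]
    have := id_cv_i (Bialgebra.comulAlgHom R H) x
    exact this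
  have inv : cv (comul ∘ₗ antipode R) (comul : H →ₗ[R] H ⊗[R] H) = cvOne _ := by
    have := hom_cv (Bialgebra.comulAlgHom R H) (antipode R) LinearMap.id
    rw [S_cv, hom_one] at this
    exact this.symm
  have := congrArg (cv (comul ∘ₗ antipode R)) key
  rwa [← cv_assoc, ← cv_assoc, inv, one_cv, one_cv] at this

/-- `w₂ ⊗ w₁ (q ◁ w₃) = w₁ ⊗ q w₂`. -/
lemma swapped (hc : ∀ y : H, TensorProduct.comm R H H (comul y) = comul y)
    (q : H) :
    cv i2.toLinearMap (TensorProduct.map LinearMap.id ((act (R := R)).flip q) ∘ₗ comul) =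
      TensorProduct.map LinearMap.id (LinearMap.mulLeft R q) ∘ₗ comul := by
  rw [map_eq_cv, map_eq_cv, ← cv_assoc, LinearMap.comp_id,
    cv_comm hc i2.toLinearMap i1.toLinearMap (by intros; simp), cv_assoc, id_cv_i]
  congr 1
  ext; simp

/-- The braiding. -/
noncomputable def sig : H ⊗[R] H →ₗ[R] H ⊗[R] H :=
  TensorProduct.lift (LinearMap.mk₂ R (fun x y => LinearMap.lTensor H (act.flip x) (comul y))
    (by intros; simp [LinearMap.lTensor_add]) (by intros; simp [LinearMap.lTensor_smul])
    (by intros; simp) (by intros; simp))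

lemma sig_tmul (x y : H) :
    sig (R := R) (x ⊗ₜ y) = LinearMap.lTensor H (act.flip x) (comul y) := by
  simp [sig]

/-- `a ⊗ b ↦ t₁ ◁ b₁ ⊗ (x ◁ a) ◁ (t₂ ◁ b₂)`. -/
noncomputable def aux (x : H) (t : H ⊗[R] H) : H ⊗[R] H →ₗ[R] H ⊗[R] H :=
  TensorProduct.lift (LinearMap.mk₂ R
    (fun (a b : H) => LinearMap.lTensor H (act.flip (act (R := R) a x)) (dia (R := R) b t))
    (by intros; simp [LinearMap.lTensor_add]) (by intros; simp [LinearMap.lTensor_smul])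
    (by intros; simp) (by intros; simp))

lemma aux_tmul (x : H) (t : H ⊗[R] H) (a b : H) :
    aux x t (a ⊗ₜ b) = LinearMap.lTensor H (act.flip (act (R := R) a x)) (dia (R := R) b t) := by
  simp [aux]

/-- Equivariance. -/
lemma sig_equiv (hc : ∀ y : H, TensorProduct.comm R H H (comul y) = comul y)
    (x y w : H) :
    sig (TensorProduct.map (act.flip x) (act.flip y) (comul w)) =
      dia (R := R) w (sig (x ⊗ₜ y)) := by
  rw [sig_tmul]
  -- first expand `comul (y ◁ w₂)`
  have h1 : ∀ u : H ⊗[R] H, sig (TensorProduct.map (act.flip x) (act.flip y) u) =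
      aux x (comul y) u := by
    intro u
    induction u with
    | zero => simp
    | add s t hs ht => simp only [map_add, hs, ht]
    | tmul a b =>
      have := LinearMap.congr_fun (comul_act hc y) b
      simp only [LinearMap.comp_apply, LinearMap.flip_apply] at this
      simp [sig_tmul, this, aux_tmul]
  rw [h1]
  clear h1
  induction (comul y : H ⊗[R] H) with
  | zero =>
    simp only [map_zero]
    induction (comul w : H ⊗[R] H) with
    | zero => simp
    | add s t hs ht => simp only [map_add, hs, ht, add_zero]
    | tmul a b => simp [aux_tmul]
  | add s t hs ht =>
    simp only [map_add]
    rw [← hs, ← ht]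
    induction (comul w : H ⊗[R] H) with
    | zero => simp
    | add s t hs ht => simp only [map_add, hs, ht]; abel
    | tmul a b => simp [aux_tmul]
  | tmul p q =>
    have h2 := congrArg (TensorProduct.map (act.flip p) (act.flip x))
      (LinearMap.congr_fun (swapped hc q) w)
    have h3 : dia (R := R) w (LinearMap.lTensor H (act.flip x) (p ⊗ₜ q)) =
        TensorProduct.map (act.flip p) (act.flip x)
          ((TensorProduct.map LinearMap.id (LinearMap.mulLeft R q) ∘ₗ comul) w) := by
      have := LinearMap.congr_fun (dia_tmul (R := R) p (act (R := R) q x)) w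
      simp only [LinearMap.flip_apply] at this
      rw [LinearMap.lTensor_tmul, LinearMap.flip_apply, this]
      simp only [LinearMap.comp_apply]
      induction (comul w : H ⊗[R] H) with
      | zero => simp
      | add s t hs ht => simp only [map_add, hs, ht]
      | tmul a b => simp [act_mul]
    rw [h3, ← h2, cv_apply]
    induction (comul w : H ⊗[R] H) with
    | zero => simp
    | add s t hs ht => simp only [map_add, hs, ht]
    | tmul a b =>
      have := LinearMap.congr_fun (dia_tmul (R := R) p q) b
      simp only [LinearMap.flip_apply] at this
      simp only [aux_tmul, this, LinearMap.comp_apply,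
        TensorProduct.map_tmul, LinearMap.mul'_apply]
      induction (comul b : H ⊗[R] H) with
      | zero => simp
      | add s t hs ht => simp only [map_add, mul_add, hs, ht]
      | tmul c d => simp [act_mul]

/-- `σ` on the last two factors. -/
noncomputable def s23 : (H ⊗[R] H) ⊗[R] H →ₗ[R] (H ⊗[R] H) ⊗[R] H :=
  (TensorProduct.assoc R H H H).symm.toLinearMap ∘ₗ LinearMap.lTensor H sig ∘ₗ
    (TensorProduct.assoc R H H H).toLinearMap

/-- `σ₁₂ σ₂₃ (t ⊗ z)`. -/
lemma s12_s23 (t : H ⊗[R] H) (z : H) :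
    LinearMap.rTensor H sig (s23 (t ⊗ₜ z)) =
      (TensorProduct.assoc R H H H).symm
        (LinearMap.lTensor H (dia.flip t) (comul z)) := by
  induction t with
  | zero => simp
  | add s t hs ht => simp only [map_add, TensorProduct.add_tmul, LinearMap.lTensor_add,
      LinearMap.add_apply, hs, ht]
  | tmul p q =>
    rw [dia_tmul, LinearMap.lTensor_comp, LinearMap.comp_apply, ← coassoc_apply]
    simp only [s23, LinearMap.comp_apply, LinearEquiv.coe_coe, TensorProduct.assoc_tmul,
      LinearMap.lTensor_tmul, sig_tmul]
    induction (comul z : H ⊗[R] H) with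
    | zero => simp
    | add s t hs ht => simp only [map_add, TensorProduct.tmul_add, hs, ht]
    | tmul a b =>
      simp only [LinearMap.lTensor_tmul, LinearMap.rTensor_tmul, TensorProduct.assoc_symm_tmul,
        sig_tmul]
      induction (comul a : H ⊗[R] H) with
      | zero => simp
      | add s t hs ht => simp only [map_add, TensorProduct.add_tmul, hs, ht]
      | tmul c d => simp

lemma s23_s12_s23 (x y z : H) :
    s23 (LinearMap.rTensor H sig (s23 ((x ⊗ₜ y) ⊗ₜ z))) =
      (TensorProduct.assoc R H H H).symm
        (LinearMap.lTensor H
          (sig ∘ₗ TensorProduct.map (act.flip x) (act.flip y) ∘ₗ comul) (comul z)) := by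
  rw [s12_s23, dia_tmul]
  simp only [s23, LinearMap.comp_apply, LinearEquiv.coe_coe, LinearEquiv.apply_symm_apply,
    LinearMap.lTensor_comp]

theorem ybe (hc : ∀ y : H, TensorProduct.comm R H H (comul y) = comul y) :
    LinearMap.rTensor H sig ∘ₗ s23 ∘ₗ LinearMap.rTensor H sig =
      s23 ∘ₗ LinearMap.rTensor H sig ∘ₗ (s23 (R := R) (H := H)) := by
  apply TensorProduct.ext_threefold
  intro x y z
  simp only [LinearMap.comp_apply]
  rw [s23_s12_s23, LinearMap.rTensor_tmul, s12_s23]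
  congr 2
  congr 1
  ext w
  exact (sig_equiv hc x y w).symm

/-- `y ⊗ x ↦ y₁ ⊗ f(y₂) x`. -/
noncomputable def Phi (f : H →ₗ[R] Module.End R H) : H ⊗[R] H →ₗ[R] H ⊗[R] H :=
  LinearMap.lTensor H (TensorProduct.lift f) ∘ₗ (TensorProduct.assoc R H H H).toLinearMap ∘ₗ
    LinearMap.rTensor H comul

lemma Phi_cv (f g : H →ₗ[R] Module.End R H) : Phi (cv f g) = Phi f ∘ₗ Phi g := by
  ext y x
  simp only [Phi, LinearMap.comp_apply, LinearEquiv.coe_coe, TensorProduct.AlgebraTensorModule.curry_apply, LinearMap.restrictScalars_self, TensorProduct.curry_apply, LinearMap.rTensor_tmul]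
  have e1 : ∀ u : H ⊗[R] H,
      LinearMap.lTensor H (TensorProduct.lift (cv f g)) (TensorProduct.assoc R H H H (u ⊗ₜ x)) =
      LinearMap.lTensor H (((LinearMap.mul' R (Module.End R H) ∘ₗ TensorProduct.map f g).flip x))
        (LinearMap.lTensor H comul u) := by
    intro u
    induction u with
    | zero => simp
    | add s t hs ht => simp only [map_add, TensorProduct.add_tmul, hs, ht]
    | tmul a b => simp [cv_apply]
  rw [e1, ← coassoc_apply]
  induction (comul y : H ⊗[R] H) with
  | zero => simp
  | add s t hs ht => simp only [map_add, TensorProduct.add_tmul, hs, ht]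
  | tmul a b =>
    simp only [LinearMap.lTensor_tmul, LinearMap.rTensor_tmul, TensorProduct.assoc_tmul]
    induction (comul a : H ⊗[R] H) with
    | zero => simp
    | add s t hs ht => simp only [map_add, TensorProduct.add_tmul, hs, ht]
    | tmul c d => simp

lemma Phi_one : Phi (cvOne (R := R) (H := H) (Module.End R H)) = LinearMap.id := by
  ext y x
  have e1 : ∀ u : H ⊗[R] H,
      LinearMap.lTensor H (TensorProduct.lift (cvOne (R := R) (H := H) (Module.End R H)))
        (TensorProduct.assoc R H H H (u ⊗ₜ x)) =
      LinearMap.lTensor H (LinearMap.toSpanSingleton R H x) (LinearMap.lTensor H counit u) := by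
    intro u
    induction u with
    | zero => simp
    | add s t hs ht => simp only [map_add, TensorProduct.add_tmul, hs, ht]
    | tmul a b => simp [cvOne]
  simp [Phi, e1]

lemma act_inv1 (hc : ∀ y : H, TensorProduct.comm R H H (comul y) = comul y) :
    cv (act (R := R)) (act ∘ₗ antipode R) = cvOne (R := R) (Module.End R H) := by
  ext1 y
  have h := congrArg (act (R := R)) (LinearMap.congr_fun (S_cv (R := R) (H := H)) y)
  have h2 : act (R := R) (cvOne (R := R) H y) = cvOne (R := R) (Module.End R H) y := by
    simp [cvOne, Algebra.algebraMap_eq_smul_one, act_one]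
  rw [← h2, ← h, cv_apply, cv_apply]
  conv_rhs => rw [← hc y]
  induction (comul y : H ⊗[R] H) with
  | zero => simp
  | add s t hs ht => simp only [map_add, hs, ht]
  | tmul c d => simp [act_mul]

lemma act_inv2 (hc : ∀ y : H, TensorProduct.comm R H H (comul y) = comul y) :
    cv (act ∘ₗ antipode R) (act (R := R)) = cvOne (R := R) (Module.End R H) := by
  ext1 y
  have h := congrArg (act (R := R)) (LinearMap.congr_fun (cv_S (R := R) (H := H)) y)
  have h2 : act (R := R) (cvOne (R := R) H y) = cvOne (R := R) (Module.End R H) y := by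
    simp [cvOne, Algebra.algebraMap_eq_smul_one, act_one]
  rw [← h2, ← h, cv_apply, cv_apply]
  conv_rhs => rw [← hc y]
  induction (comul y : H ⊗[R] H) with
  | zero => simp
  | add s t hs ht => simp only [map_add, hs, ht]
  | tmul c d => simp [act_mul]

lemma sig_eq_Phi : sig (R := R) (H := H) = Phi act ∘ₗ (TensorProduct.comm R H H).toLinearMap := by
  ext x y
  simp only [Phi, LinearMap.comp_apply, LinearEquiv.coe_coe, TensorProduct.AlgebraTensorModule.curry_apply, LinearMap.restrictScalars_self, TensorProduct.curry_apply, TensorProduct.comm_tmul, LinearMap.rTensor_tmul, sig_tmul]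
  induction (comul y : H ⊗[R] H) with
  | zero => simp
  | add s t hs ht => simp only [map_add, TensorProduct.add_tmul, hs, ht]
  | tmul c d => simp

lemma sig_bij (hc : ∀ y : H, TensorProduct.comm R H H (comul y) = comul y) :
    Function.Bijective (sig (R := R) (H := H)) := by
  rw [sig_eq_Phi, LinearMap.coe_comp]
  refine Function.Bijective.comp ?_ (TensorProduct.comm R H H).bijective
  refine Function.bijective_iff_has_inverse.mpr ⟨Phi (act ∘ₗ antipode R), fun u => ?_, fun u => ?_⟩
  · rw [← LinearMap.comp_apply, ← Phi_cv, act_inv2 hc, Phi_one]; rfl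
  · rw [← LinearMap.comp_apply, ← Phi_cv, act_inv1 hc, Phi_one]; rfl

end YB18

/-- For a cocommutative Hopf algebra `H` over `R` with bijective antipode
`S`, the linear map `σ : H ⊗ H → H ⊗ H`, `x ⊗ y ↦ y₍₁₎ ⊗ S(y₍₂₎)·x·y₍₃₎` (written as a
composite of structure maps) satisfies the Yang–Baxter equation and is a linear
automorphism of `H ⊗ H`. -/
theorem stmt18 {R : Type*} [CommRing R] {H : Type*} [Ring H] [HopfAlgebra R H]
    (hcocomm : (TensorProduct.comm R H H).toLinearMap ∘ₗ
        (Coalgebra.comul (R := R) (A := H)) = Coalgebra.comul)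
    (hS : Function.Bijective (HopfAlgebra.antipode (R := R) (A := H))) :
    (let Δ : H →ₗ[R] H ⊗[R] H := Coalgebra.comul
     let μ : H ⊗[R] H →ₗ[R] H := LinearMap.mul' R H
     let S : H →ₗ[R] H := HopfAlgebra.antipode (R := R) (A := H)
     -- the permutation `x ⊗ ((y₁ ⊗ y₂) ⊗ y₃) ↦ y₁ ⊗ ((y₂ ⊗ x) ⊗ y₃)`:
     let P : (H ⊗[R] ((H ⊗[R] H) ⊗[R] H)) ≃ₗ[R] (H ⊗[R] ((H ⊗[R] H) ⊗[R] H)) :=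
       (TensorProduct.congr (LinearEquiv.refl R H) (TensorProduct.assoc R H H H)).trans <|
        ((TensorProduct.assoc R H H (H ⊗[R] H)).symm).trans <|
         (TensorProduct.congr (TensorProduct.comm R H H)
            (LinearEquiv.refl R (H ⊗[R] H))).trans <|
          (TensorProduct.assoc R H H (H ⊗[R] H)).trans <|
           (TensorProduct.congr (LinearEquiv.refl R H)
              (TensorProduct.assoc R H H H).symm).trans <|
            TensorProduct.congr (LinearEquiv.refl R H)
              (TensorProduct.congr (TensorProduct.comm R H H) (LinearEquiv.refl R H))
     let σ : H ⊗[R] H →ₗ[R] H ⊗[R] H :=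
       (LinearMap.lTensor H (μ ∘ₗ LinearMap.rTensor H μ)) ∘ₗ
         (LinearMap.lTensor H (LinearMap.rTensor H (LinearMap.rTensor H S))) ∘ₗ
           P.toLinearMap ∘ₗ (LinearMap.lTensor H ((LinearMap.rTensor H Δ) ∘ₗ Δ))
     ((LinearMap.rTensor H σ) ∘ₗ
          ((TensorProduct.assoc R H H H).symm.toLinearMap ∘ₗ LinearMap.lTensor H σ ∘ₗ
            (TensorProduct.assoc R H H H).toLinearMap) ∘ₗ (LinearMap.rTensor H σ) =
        ((TensorProduct.assoc R H H H).symm.toLinearMap ∘ₗ LinearMap.lTensor H σ ∘ₗ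
            (TensorProduct.assoc R H H H).toLinearMap) ∘ₗ (LinearMap.rTensor H σ) ∘ₗ
          ((TensorProduct.assoc R H H H).symm.toLinearMap ∘ₗ LinearMap.lTensor H σ ∘ₗ
            (TensorProduct.assoc R H H H).toLinearMap)) ∧
       Function.Bijective σ) := by

  intro Δ μ S P σ
  have hc : ∀ y : H, TensorProduct.comm R H H (Coalgebra.comul y) = Coalgebra.comul y :=
    fun y => LinearMap.congr_fun hcocomm y
  have hσ : σ = YB18.sig := by
    ext x y
    have e1 : ∀ u : (H ⊗[R] H) ⊗[R] H, P (x ⊗ₜ u) =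
        LinearMap.lTensor H (LinearMap.rTensor H ((TensorProduct.mk R H H).flip x))
          (TensorProduct.assoc R H H H u) := by
      intro u
      induction u with
      | zero => simp
      | add s t hs ht => simp only [map_add, TensorProduct.tmul_add, hs, ht]
      | tmul s c =>
        induction s with
        | zero => simp
        | add s t hs ht => simp only [map_add, TensorProduct.tmul_add, TensorProduct.add_tmul, hs, ht]
        | tmul a b => simp [P]
    simp only [σ, LinearMap.comp_apply, LinearEquiv.coe_coe,
      TensorProduct.AlgebraTensorModule.curry_apply, LinearMap.restrictScalars_self,
      TensorProduct.curry_apply, LinearMap.lTensor_tmul, e1, Δ, Coalgebra.coassoc_apply,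
      YB18.sig_tmul]
    induction (Coalgebra.comul y : H ⊗[R] H) with
    | zero => simp
    | add s t hs ht => simp only [map_add, hs, ht]
    | tmul a b =>
      simp only [LinearMap.lTensor_tmul]
      congr 1
      simp only [LinearMap.flip_apply, YB18.act, LinearMap.comp_apply]
      induction (Coalgebra.comul b : H ⊗[R] H) with
      | zero => simp
      | add s t hs ht => simp only [map_add, LinearMap.add_apply, hs, ht]
      | tmul c d => simp [YB18.act₂_tmul, μ, S, mul_assoc]
  rw [hσ]
  exact ⟨YB18.ybe hc, YB18.sig_bij hc⟩
end

section
/- Let (S,◁) be a shelf. For n ≥ 1 and 1 ≤ i ≤ n define maps d_i, d'_i : S^n → S^{n−1} by d_i(a_1,…,a_n) = (a_1◁a_i, …, a_{i−1}◁a_i, a_{i+1}, …, a_n) and d'_i(a_1,…,a_n) = (a_1, …, a_{i−1}, a_{i+1}, …, a_n). Then these maps form a pre-bisimplicial structure: for all 1 ≤ i < j ≤ n one has d_i ∘ d_j = d_{j−1} ∘ d_i, d'_i ∘ d'_j = d'_{j−1} ∘ d'_i, d_i ∘ d'_j = d'_{j−1} ∘ d_i, and d'_i ∘ d_j = d_{j−1}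 ∘ d'_i. Consequently, for any commutative ring R, the R-linear maps ∂_n : R[S^n] → R[S^{n−1}] defined on basis elements by ∂_n = Σ_{i=1}^n (−1)^{i−1}(d_i − d'_i) satisfy ∂_{n−1} ∘ ∂_n = 0. -/
/-- The face map `d_i(a_1,…,a_n) = (a_1◁a_i, …, a_{i−1}◁a_i, a_{i+1}, …, a_n)`
(here written 0-indexed on `S^{n+1} → S^n`). -/
def dmap {S : Type*} (op : S → S → S) {n : ℕ} (i : Fin (n + 1)) (a : Fin (n + 1) → S) :
    Fin n → S :=
  fun j => if (j : ℕ) < (i : ℕ) then op (a j.castSucc) (a i) else a j.succ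

/-- The face map `d'_i(a_1,…,a_n) = (a_1, …, a_{i−1}, a_{i+1}, …, a_n)`. -/
def d'map {S : Type*} {n : ℕ} (i : Fin (n + 1)) (a : Fin (n + 1) → S) : Fin n → S :=
  fun j => if (j : ℕ) < (i : ℕ) then a j.castSucc else a j.succ

/-- The total differential `∂ = Σ_i (−1)^{i−1}(d_i − d'_i)` on the free `R`-module
`R[S^n]` (0-indexed, so the sign is `(−1)^i`). -/
noncomputable def rackDiff (R : Type*) [CommRing R] {S : Type*} (op : S → S → S) (n : ℕ) :
    ((Fin (n + 1) → S) →₀ R) →ₗ[R] ((Fin n → S) →₀ R) :=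
  ∑ i : Fin (n + 1), ((-1 : R) ^ (i : ℕ)) •
    (Finsupp.lmapDomain R R (dmap op i) - Finsupp.lmapDomain R R (d'map i))

theorem aux_faces {S : Type*} (op : S → S → S)
    (hsd : ∀ a b c : S, op (op a b) c = op (op a c) (op b c))
    (n : ℕ) (i : Fin (n + 1)) (j : Fin (n + 2)) (hij : (i : ℕ) < (j : ℕ))
    (h : (j : ℕ) - 1 < n + 1) :
      (dmap op i ∘ dmap op j = dmap op ⟨(j : ℕ) - 1, h⟩ ∘ dmap op i.castSucc) ∧
      (d'map (S := S) i ∘ d'map j = d'map ⟨(j : ℕ) - 1, h⟩ ∘ d'map i.castSucc) ∧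
      (dmap op i ∘ d'map j = d'map ⟨(j : ℕ) - 1, h⟩ ∘ dmap op i.castSucc) ∧
      (d'map i ∘ dmap op j = dmap op ⟨(j : ℕ) - 1, h⟩ ∘ d'map i.castSucc) := by
  obtain ⟨i, hi⟩ := i
  obtain ⟨j, hj⟩ := j
  obtain ⟨j, rfl⟩ : ∃ m, j = m + 1 := ⟨j - 1, by simp at hij; omega⟩
  simp only at hij
  have h1 : ¬ (j < i) := by omega
  refine ⟨?_, ?_, ?_, ?_⟩ <;>
  · funext a k
    obtain ⟨k, hk⟩ := k
    simp only [dmap, d'map, Function.comp, Fin.castSucc_mk, Fin.succ_mk, Nat.add_sub_cancel]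
    rcases lt_or_ge k i with h2 | h2
    · have h3 : k < j := by omega
      have h4 : k < j + 1 := by omega
      simp [h1, h2, h3, h4, hij, ← hsd]
    · have h5 : ¬ k < i := by omega
      have h6 : ¬ k + 1 < i := by omega
      simp [h1, h5, h6]

/-- The summand of the differential. -/
noncomputable def auxD (R : Type*) [CommRing R] {S : Type*} (op : S → S → S) {n : ℕ}
    (i : Fin (n + 1)) : ((Fin (n + 1) → S) →₀ R) →ₗ[R] ((Fin n → S) →₀ R) :=
  Finsupp.lmapDomain R R (dmap op i) - Finsupp.lmapDomain R R (d'map i)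

theorem auxD_comm (R : Type*) [CommRing R] {S : Type*} (op : S → S → S)
    (hsd : ∀ a b c : S, op (op a b) c = op (op a c) (op b c))
    (n : ℕ) (i : Fin (n + 1)) (j : Fin (n + 2)) (hij : (i : ℕ) < (j : ℕ))
    (h : (j : ℕ) - 1 < n + 1) :
    auxD R op i ∘ₗ auxD R op j = auxD R op ⟨(j : ℕ) - 1, h⟩ ∘ₗ auxD R op i.castSucc := by
  obtain ⟨h1, h2, h3, h4⟩ := aux_faces op hsd n i j hij h
  simp only [auxD, LinearMap.sub_comp, LinearMap.comp_sub, ← Finsupp.lmapDomain_comp,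
    h1, h2, h3, h4]
  abel

theorem aux_sum {M : Type*} [AddCommGroup M] (n : ℕ) (f : Fin (n + 1) → Fin (n + 2) → M)
    (hf : ∀ (i : Fin (n + 1)) (j : Fin (n + 2)), (i : ℕ) < (j : ℕ) → ∀ h : (j : ℕ) - 1 < n + 1,
      f i j = - f ⟨(j : ℕ) - 1, h⟩ i.castSucc) :
    ∑ i, ∑ j, f i j = 0 := by
  rw [← Finset.sum_product', ← Finset.sum_filter_add_sum_filter_not _
    (fun p : Fin (n + 1) × Fin (n + 2) => (p.1 : ℕ) < (p.2 : ℕ))]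
  refine eq_neg_iff_add_eq_zero.1 ?_
  rw [← Finset.sum_neg_distrib]
  refine Finset.sum_bij'
    (fun p _ => (⟨(p.2 : ℕ) - 1, by have := p.2.isLt; omega⟩, p.1.castSucc))
    (fun p hp => (⟨(p.2 : ℕ), by
      have := p.1.isLt
      have := (Finset.mem_filter.1 hp).2
      omega⟩, p.1.succ)) ?_ ?_ ?_ ?_ ?_
  · rintro ⟨i, j⟩ hp
    simp at hp ⊢
    omega
  · rintro ⟨i, j⟩ hp
    simp at hp ⊢
    omega
  · rintro ⟨i, j⟩ hp
    simp [Fin.ext_iff] at hp ⊢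
    omega
  · rintro ⟨i, j⟩ hp
    simp [Fin.ext_iff] at hp ⊢
  · rintro ⟨i, j⟩ hp
    have hij : (i : ℕ) < (j : ℕ) := (Finset.mem_filter.1 hp).2
    exact hf i j hij _

theorem rackDiff_sq (R : Type*) [CommRing R] {S : Type*} (op : S → S → S)
    (hsd : ∀ a b c : S, op (op a b) c = op (op a c) (op b c)) (n : ℕ) :
    rackDiff R op n ∘ₗ rackDiff R op (n + 1) = 0 := by
  have e : ∀ m, rackDiff R op m = ∑ i : Fin (m + 1), ((-1 : R) ^ (i : ℕ)) • auxD R op i :=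
    fun _ => rfl
  have e2 : rackDiff R op n ∘ₗ rackDiff R op (n + 1) =
      ∑ i : Fin (n + 1), ∑ j : Fin (n + 2),
        ((-1 : R) ^ ((i : ℕ) + (j : ℕ))) • (auxD R op i ∘ₗ auxD R op j) := by
    rw [e, e]
    refine LinearMap.ext fun x => ?_
    simp only [LinearMap.comp_apply, LinearMap.sum_apply, LinearMap.smul_apply, map_sum,
      map_smul, Finset.smul_sum, smul_smul, pow_add]
    rw [Finset.sum_comm]
    simp only [mul_comm]
  rw [e2]
  refine aux_sum (M := ((Fin (n + 1 + 1) → S) →₀ R) →ₗ[R] ((Fin n → S) →₀ R)) n _ ?_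
  intro i j hij h
  rw [auxD_comm R op hsd n i j hij h]
  have key : (-1 : R) ^ ((i : ℕ) + (j : ℕ)) = -(-1 : R) ^ (((j : ℕ) - 1) + (i : ℕ)) := by
    obtain ⟨m, hm⟩ : ∃ m, (j : ℕ) = m + 1 := ⟨j - 1, by omega⟩
    simp [hm]
    ring
  rw [key]
  exact neg_smul (R := R) (M := ((Fin (n + 1 + 1) → S) →₀ R) →ₗ[R] ((Fin n → S) →₀ R)) _ _

/-- For a shelf `(S,◁)`, the maps `d_i`, `d'_i` form a pre-bisimplicial
structure (for `i < j`: `d_i∘d_j = d_{j−1}∘d_i`, `d'_i∘d'_j = d'_{j−1}∘d'_i`,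
`d_i∘d'_j = d'_{j−1}∘d_i`, `d'_i∘d_j = d_{j−1}∘d'_i`), and consequently for any
commutative ring `R` the induced linear maps `∂` satisfy `∂ ∘ ∂ = 0`. -/
theorem stmt19 {S : Type*} (op : S → S → S)
    (hsd : ∀ a b c : S, op (op a b) c = op (op a c) (op b c)) :
    (∀ (n : ℕ) (i : Fin (n + 1)) (j : Fin (n + 2)), (i : ℕ) < (j : ℕ) →
      (dmap op i ∘ dmap op j =
        dmap op ⟨(j : ℕ) - 1, by have := j.isLt; omega⟩ ∘ dmap op i.castSucc) ∧
      (d'map (S := S) i ∘ d'map j =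
        d'map ⟨(j : ℕ) - 1, by have := j.isLt; omega⟩ ∘ d'map i.castSucc) ∧
      (dmap op i ∘ d'map j =
        d'map ⟨(j : ℕ) - 1, by have := j.isLt; omega⟩ ∘ dmap op i.castSucc) ∧
      (d'map i ∘ dmap op j =
        dmap op ⟨(j : ℕ) - 1, by have := j.isLt; omega⟩ ∘ d'map i.castSucc)) ∧
    (∀ (R : Type) (_ : CommRing R) (n : ℕ),
      rackDiff R op n ∘ₗ rackDiff R op (n + 1) = 0) := by
  exact ⟨fun n i j hij => aux_faces op hsd n i j hij _,
    fun R _ n => rackDiff_sq R op hsd n⟩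
end
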